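/- Let (X_i)_{i∈ℤ} be a stationary ergodic process over a finite alphabet 𝕏 with entropy rate h. For any ε > 0 and any sequence of sample sizes n(k) ≥ 2^{k(h+ε)}, almost surely liminf_{k→∞} H(k, X_1^{n(k)})/k = h. -/

import Mathlib

open MeasureTheory Filter Real

variable {𝕏 : Type*} [Fintype 𝕏] [Nonempty 𝕏] [DecidableEq 𝕏]
  [MeasurableSpace 𝕏] [MeasurableSingletonClass 𝕏]

/-- The left shift on two-sided sequences: `(shift ω) i = ω (i + 1)`. -/
def shift (ω : ℤ → 𝕏) : ℤ → 𝕏 := fun i => ω (i + 1)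

/-- The block `X_{s+1}^{s+l}` of a sequence `ω`, as a tuple in `𝕏^l`. -/
def blk (s l : ℕ) (ω : ℤ → 𝕏) : Fin l → 𝕏 := fun i => ω ((s : ℤ) + 1 + (i : ℤ))

/-- Shannon entropy (base 2) of a distribution `p` on a finite set:
`H(p) = -∑_{w : p w > 0} p w * log₂ (p w)` (`logb 2 0 = 0`, so zero-mass
points contribute nothing). -/
noncomputable def Hent {A : Type*} [Fintype A] (p : A → ℝ) : ℝ :=
  -∑ w, p w * Real.logb 2 (p w)

/-- Empirical nonoverlapping-block distribution
`p_k(w, x_1^n) = ⌊n/k⌋⁻¹ ∑_{i=1}^{⌊n/k⌋} 1[x_{(i-1)k+1}^{ik} = w]`. -/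
noncomputable def empDist (k n : ℕ) (ω : ℤ → 𝕏) : (Fin k → 𝕏) → ℝ :=
  fun w => (∑ i ∈ Finset.range (n / k), if blk (i * k) k ω = w then (1 : ℝ) else 0) / (n / k : ℕ)

/-- Plug-in estimator `H(k, x_1^n)` of the block entropy. -/
noncomputable def plugIn (k n : ℕ) (ω : ℤ → 𝕏) : ℝ := Hent (empDist k n ω)

/-- True block distribution `p_k(w) = P(X_1^k = w)`. -/
noncomputable def pblock (μ : Measure (ℤ → 𝕏)) (k : ℕ) : (Fin k → 𝕏) → ℝ :=
  fun w => (μ {ω | blk 0 k ω = w}).toReal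

/-- Block entropy `H(k) = H(p_k)`. -/
noncomputable def Hblock (μ : Measure (ℤ → 𝕏)) (k : ℕ) : ℝ := Hent (pblock μ k)

/-- Number `D(k, x_1^n)` of distinct nonoverlapping `k`-blocks in `x_1^n`. -/
noncomputable def Dcount (k n : ℕ) (ω : ℤ → 𝕏) : ℕ :=
  Set.ncard {w : Fin k → 𝕏 | ∃ i < n / k, blk (i * k) k ω = w}

/-- Length bound `K(k, x_1^n)` of the modified `k`-block code:
`K(k,x_1^n) = 2 log₂ k + (n/k)(H(k,x_1^n) + 2) + 3 k log₂|𝕏| (D(k,x_1^n) + 1)`. -/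
noncomputable def Kcode (k n : ℕ) (ω : ℤ → 𝕏) : ℝ :=
  2 * Real.logb 2 k + ((n : ℝ) / k) * (plugIn k n ω + 2)
    + 3 * k * Real.logb 2 (Fintype.card 𝕏) * (Dcount k n ω + 1)

/-- Conditional probability `P(X_1^k = w | ℐ)` given the shift-invariant
σ-algebra `ℐ`, as a function of the sample point. -/
noncomputable def condP (μ : Measure (ℤ → 𝕏)) (k : ℕ) (w : Fin k → 𝕏) : (ℤ → 𝕏) → ℝ :=
  μ[Set.indicator {ω | blk 0 k ω = w} (fun _ => (1 : ℝ)) | MeasurableSpace.invariants shift]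

/-- Conditional block entropy `H(X_1^k | ℐ) = E[-log₂ P(X_1^k = w | ℐ)|_{w = X_1^k}]`. -/
noncomputable def condH (μ : Measure (ℤ → 𝕏)) (k : ℕ) : ℝ :=
  ∫ ω, -Real.logb 2 (condP μ k (blk 0 k ω) ω) ∂μ

/-- `σ(y) = min(2^y, 1)`. -/
noncomputable def sigmaFn (y : ℝ) : ℝ := min ((2 : ℝ) ^ y) 1

/-- Negative part `x⁻ = -x · 1[x < 0]`. -/
noncomputable def nPart (x : ℝ) : ℝ := if x < 0 then -x else 0

set_option linter.unusedSectionVars false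
set_option linter.unusedVariables false

section Birk
variable {Ω : Type*} [MeasurableSpace Ω]

/-- running maxima of Birkhoff sums -/
noncomputable def bmax (T : Ω → Ω) (g : Ω → ℝ) : ℕ → Ω → ℝ
  | 0 => g
  | n + 1 => fun x => g x + max 0 (bmax T g n (T x))

lemma bmax_ge (T : Ω → Ω) (g : Ω → ℝ) (n : ℕ) (x : Ω) : g x ≤ bmax T g n x := by
  cases n with
  | zero => exact le_rfl
  | succ n => simp [bmax]

lemma bmax_mono (T : Ω → Ω) (g : Ω → ℝ) (n : ℕ) : ∀ x, bmax T g n x ≤ bmax T g (n + 1) x := by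
  induction n with
  | zero => intro x; simp [bmax]
  | succ n ih =>
    intro x
    have := ih (T x)
    change g x + max 0 (bmax T g n (T x)) ≤ g x + max 0 (bmax T g (n + 1) (T x))
    gcongr

lemma bmax_sum (T : Ω → Ω) (g : Ω → ℝ) (n : ℕ) :
    ∀ x, ∑ j ∈ Finset.range (n + 1), g (T^[j] x) ≤ bmax T g n x := by
  induction n with
  | zero => intro x; simp [bmax]
  | succ n ih =>
    intro x
    rw [Finset.sum_range_succ']
    have := ih (T x)
    simp only [Function.iterate_succ_apply, Function.iterate_zero, id]
    change _ ≤ g x + max 0 (bmax T g n (T x))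
    have h2 := le_max_right 0 (bmax T g n (T x))
    linarith

lemma bmax_int {μ : Measure Ω} {T : Ω → Ω} (hT : MeasurePreserving T μ μ) {g : Ω → ℝ}
    (hg : Integrable g μ) (n : ℕ) : Integrable (bmax T g n) μ := by
  induction n with
  | zero => exact hg
  | succ n ih =>
    have h1 : Integrable (fun x => bmax T g n (T x)) μ := hT.integrable_comp_of_integrable ih
    have h2 := hg.add h1.pos_part
    refine h2.congr (Eventually.of_forall fun x => ?_)
    simp [bmax, max_comm]

lemma bmax_meas {T : Ω → Ω} (hT : Measurable T) {g : Ω → ℝ}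
    (hg : Measurable g) (n : ℕ) : Measurable (bmax T g n) := by
  induction n with
  | zero => exact hg
  | succ n ih => exact hg.add (measurable_const.max (ih.comp hT))

lemma birk_aux {μ : Measure Ω} [IsProbabilityMeasure μ] {T : Ω → Ω} (hT : Ergodic T μ)
    {g : Ω → ℝ} (hg : Measurable g) {B : ℝ} (hB : ∀ x, |g x| ≤ B) (hc : ∫ x, g x ∂μ < 0) :
    ∀ᵐ x ∂μ, ∃ C, ∀ n, ∑ j ∈ Finset.range (n + 1), g (T^[j] x) ≤ C := by
  have hT' := hT.toMeasurePreserving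
  have hgi : Integrable g μ :=
    Integrable.of_bound hg.aestronglyMeasurable B (Eventually.of_forall hB)
  set A : Set Ω := {x | ∃ C, ∀ n, bmax T g n x ≤ C} with hA
  have hAm : MeasurableSet A := by
    have : A = ⋃ C : ℕ, ⋂ n, {x | bmax T g n x ≤ C} := by
      ext x
      simp only [hA, Set.mem_setOf_eq, Set.mem_iUnion, Set.mem_iInter]
      constructor
      · rintro ⟨C, hC⟩
        obtain ⟨m, hm⟩ := exists_nat_ge C
        exact ⟨m, fun n => (hC n).trans hm⟩
      · rintro ⟨C, hC⟩
        exact ⟨C, hC⟩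
    rw [this]
    exact MeasurableSet.iUnion fun C => MeasurableSet.iInter fun n =>
      measurableSet_le (bmax_meas hT'.measurable hg n) measurable_const
  have hinv : T ⁻¹' A = A := by
    ext x
    simp only [hA, Set.mem_preimage, Set.mem_setOf_eq]
    constructor
    · rintro ⟨C, hC⟩
      refine ⟨g x + max 0 C, fun n => (bmax_mono T g n x).trans ?_⟩
      change g x + max 0 (bmax T g n (T x)) ≤ _
      have := hC n
      gcongr
    · rintro ⟨C, hC⟩
      refine ⟨C - g x, fun n => ?_⟩
      have h1 : g x + max 0 (bmax T g n (T x)) ≤ C := hC (n + 1)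
      have h2 := le_max_right 0 (bmax T g n (T x))
      linarith
  have key : ∀ᵐ x ∂μ, x ∈ A := by
    rcases hT.toPreErgodic.ae_mem_or_ae_notMem hAm hinv with h | h
    · exact h
    · exfalso
      have hlim : Tendsto (fun n => ∫ x, (g x - min 0 (bmax T g n (T x))) ∂μ) atTop
          (nhds (∫ x, g x ∂μ)) := by
        refine tendsto_integral_of_dominated_convergence (fun _ => B + B) ?_ ?_ ?_ ?_
        · intro n
          exact (hg.sub (measurable_const.min
            ((bmax_meas hT'.measurable hg n).comp hT'.measurable))).aestronglyMeasurable
        · exact integrable_const _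
        · intro n
          refine Eventually.of_forall fun x => ?_
          have h1 := bmax_ge T g n (T x)
          have h2 := abs_le.1 (hB x)
          have h3 := abs_le.1 (hB (T x))
          rw [Real.norm_eq_abs, abs_le]
          rcases le_total 0 (bmax T g n (T x)) with h4 | h4
          · rw [min_eq_left h4]; constructor <;> linarith
          · rw [min_eq_right h4]; constructor <;> linarith
        · filter_upwards [h] with x hx
          have hx' : T x ∉ A := by
            intro h'
            exact hx (by rw [← hinv]; exact h')
          simp only [hA, Set.mem_setOf_eq, not_exists, not_forall, not_le] at hx'
          obtain ⟨n0, hn0⟩ := hx' 0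
          refine tendsto_const_nhds.congr' ?_
          filter_upwards [eventually_ge_atTop n0] with n hn
          have hmono : Monotone (fun n => bmax T g n (T x)) :=
            monotone_nat_of_le_succ fun n => bmax_mono T g n (T x)
          have h5 : bmax T g n0 (T x) ≤ bmax T g n (T x) := hmono hn
          rw [min_eq_left (by linarith)]; simp
      have hnn : ∀ n, 0 ≤ ∫ x, (g x - min 0 (bmax T g n (T x))) ∂μ := by
        intro n
        have e1 : ∀ x, g x - min 0 (bmax T g n (T x)) = bmax T g (n + 1) x - bmax T g n (T x) := by
          intro x
          change _ = g x + max 0 (bmax T g n (T x)) - bmax T g n (T x)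
          have := min_add_max 0 (bmax T g n (T x))
          linarith
        have i1 := bmax_int hT' hgi n
        have i2 := bmax_int hT' hgi (n + 1)
        have i3 : Integrable (fun x => bmax T g n (T x)) μ := hT'.integrable_comp_of_integrable i1
        have e2 : ∫ x, bmax T g n (T x) ∂μ = ∫ x, bmax T g n x ∂μ := by
          have := integral_map (μ := μ) hT'.measurable.aemeasurable
            (f := bmax T g n) (by rw [hT'.map_eq]; exact i1.aestronglyMeasurable)
          rw [hT'.map_eq] at this
          exact this.symm
        simp_rw [e1]
        rw [integral_sub i2 i3, e2, sub_nonneg]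
        exact integral_mono i1 i2 (fun x => bmax_mono T g n x)
      have := ge_of_tendsto' hlim hnn
      linarith
  filter_upwards [key] with x hx
  obtain ⟨C, hC⟩ := hx
  exact ⟨C, fun n => (bmax_sum T g n x).trans (hC n)⟩

lemma birk_lower {μ : Measure Ω} [IsProbabilityMeasure μ] {T : Ω → Ω} (hT : Ergodic T μ)
    {f : Ω → ℝ} (hf : Measurable f) {B : ℝ} (hB : ∀ x, |f x| ≤ B) {c : ℝ}
    (hc : c < ∫ x, f x ∂μ) :
    ∀ᵐ x ∂μ, ∀ᶠ n : ℕ in atTop, n * c ≤ ∑ j ∈ Finset.range n, f (T^[j] x) := by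
  obtain ⟨d, hd1, hd2⟩ := exists_between hc
  have hfi : Integrable f μ :=
    Integrable.of_bound hf.aestronglyMeasurable B (Eventually.of_forall hB)
  have := birk_aux hT (g := fun x => d - f x) (measurable_const.sub hf) (B := |d| + B)
    (fun x => (abs_sub _ _).trans (by have := hB x; linarith))
    (by rw [integral_sub (integrable_const _) hfi]; simp; exact hd2)
  filter_upwards [this] with x hx
  obtain ⟨C, hC⟩ := hx
  have ht : Tendsto (fun n : ℕ => (n : ℝ) * (d - c)) atTop atTop :=
    tendsto_natCast_atTop_atTop.atTop_mul_const (by linarith)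
  filter_upwards [ht.eventually_ge_atTop C, eventually_ge_atTop 1] with n hn h1
  obtain ⟨m, rfl⟩ : ∃ m, n = m + 1 := ⟨n - 1, by omega⟩
  have h2 := hC m
  rw [Finset.sum_sub_distrib] at h2
  simp only [Finset.sum_const, Finset.card_range, nsmul_eq_mul] at h2
  linarith

lemma birk_upper {μ : Measure Ω} [IsProbabilityMeasure μ] {T : Ω → Ω} (hT : Ergodic T μ)
    {f : Ω → ℝ} (hf : Measurable f) {B : ℝ} (hB : ∀ x, |f x| ≤ B) {c : ℝ}
    (hc : ∫ x, f x ∂μ < c) :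
    ∀ᵐ x ∂μ, ∀ᶠ n : ℕ in atTop, ∑ j ∈ Finset.range n, f (T^[j] x) ≤ n * c := by
  have := birk_lower hT (f := fun x => - f x) hf.neg (B := B) (by simpa using hB) (c := -c)
    (by rw [integral_neg]; linarith)
  filter_upwards [this] with x hx
  filter_upwards [hx] with n hn
  rw [Finset.sum_neg_distrib] at hn
  linarith
end Birk

/-- window `ω_{s+1}, …, ω_{s+l}` with integer start -/
def bz (s : ℤ) (l : ℕ) (ω : ℤ → 𝕏) : Fin l → 𝕏 := fun i => ω (s + 1 + (i : ℤ))

lemma blk_eq_bz (s l : ℕ) (ω : ℤ → 𝕏) : blk s l ω = bz (s : ℤ) l ω := rfl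

lemma shift_iter (j : ℕ) (ω : ℤ → 𝕏) (i : ℤ) : shift^[j] ω i = ω (i + j) := by
  induction j generalizing ω with
  | zero => simp
  | succ j ih =>
    rw [Function.iterate_succ_apply, ih]
    simp only [shift]
    congr 1
    push_cast
    ring

lemma bz_iter (s : ℤ) (l j : ℕ) (ω : ℤ → 𝕏) : bz s l (shift^[j] ω) = bz (s + j) l ω := by
  ext i
  simp only [bz, shift_iter]
  congr 1
  ring

lemma measurable_bz (s : ℤ) (l : ℕ) : Measurable (bz (𝕏 := 𝕏) s l) :=
  measurable_pi_lambda _ fun i => measurable_pi_apply _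

lemma msInter (s : ℤ) (l : ℕ) (w : Fin l → 𝕏) : MeasurableSet {ω : ℤ → 𝕏 | bz s l ω = w} :=
  measurable_bz s l (measurableSet_singleton w)

lemma mu_bz {μ : Measure (ℤ → 𝕏)} (hT : MeasurePreserving shift μ μ) (s : ℤ) (l : ℕ)
    (w : Fin l → 𝕏) : μ {ω | bz s l ω = w} = μ {ω | blk 0 l ω = w} := by
  have key : ∀ (t : ℤ) (j : ℕ), μ {ω | bz (t + j) l ω = w} = μ {ω | bz t l ω = w} := by
    intro t j
    have := (hT.iterate j).measure_preimage (s := {ω | bz t l ω = w})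
      (msInter t l w).nullMeasurableSet
    rw [← this]
    congr 1
    ext ω
    simp [bz_iter]
  rcases le_total 0 s with h | h
  · have := key 0 s.toNat
    rw [Int.toNat_of_nonneg h, zero_add] at this
    exact this
  · have := key s (-s).toNat
    rw [Int.toNat_of_nonneg (by omega)] at this
    rw [← this]
    simp [blk_eq_bz]

lemma pblock_eq {μ : Measure (ℤ → 𝕏)} (hT : MeasurePreserving shift μ μ) (s : ℤ) (l : ℕ)
    (w : Fin l → 𝕏) : pblock μ l w = μ.real {ω | bz s l ω = w} := by
  rw [pblock, ← mu_bz hT s]; rfl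

lemma integrable_bz {μ : Measure (ℤ → 𝕏)} [IsProbabilityMeasure μ] (s : ℤ) (l : ℕ)
    (F : (Fin l → 𝕏) → ℝ) : Integrable (fun ω => F (bz s l ω)) μ :=
  (Integrable.of_finite (μ := μ.map (bz s l)) (f := F)).comp_measurable (measurable_bz s l)

lemma integral_bz {μ : Measure (ℤ → 𝕏)} [IsProbabilityMeasure μ]
    (hT : MeasurePreserving shift μ μ) (s : ℤ) (l : ℕ) (F : (Fin l → 𝕏) → ℝ) :
    ∫ ω, F (bz s l ω) ∂μ = ∑ w, pblock μ l w * F w := by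
  have h1 := integral_map (μ := μ) (measurable_bz s l).aemeasurable
    (f := F) (by exact (Measurable.of_discrete (f := F)).aestronglyMeasurable)
  rw [← h1, integral_fintype Integrable.of_finite]
  refine Finset.sum_congr rfl fun w _ => ?_
  rw [pblock_eq hT s l w, smul_eq_mul, map_measureReal_apply (measurable_bz s l)
    (measurableSet_singleton w)]
  rfl

lemma pblock_nonneg (μ : Measure (ℤ → 𝕏)) (l : ℕ) (w : Fin l → 𝕏) : 0 ≤ pblock μ l w :=
  ENNReal.toReal_nonneg

lemma pblock_sum {μ : Measure (ℤ → 𝕏)} [IsProbabilityMeasure μ]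
    (hT : MeasurePreserving shift μ μ) (l : ℕ) : ∑ w, pblock μ l w = 1 := by
  have := integral_bz hT 0 l (fun _ => 1)
  simpa using this.symm

lemma pblock_le_one {μ : Measure (ℤ → 𝕏)} [IsProbabilityMeasure μ]
    (l : ℕ) (w : Fin l → 𝕏) : pblock μ l w ≤ 1 := measureReal_le_one

lemma sum_snoc {A : Type*} [Fintype A] {l : ℕ} (F : (Fin (l + 1) → A) → ℝ) :
    ∑ v, F v = ∑ u : Fin l → A, ∑ a, F (Fin.snoc u a) := by
  rw [← (Fin.snocEquiv (fun _ : Fin (l + 1) => A)).sum_comp, Fintype.sum_prod_type_right]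
  rfl

lemma bz_snoc (s : ℤ) (l : ℕ) (ω : ℤ → 𝕏) :
    bz s (l + 1) ω = Fin.snoc (bz s l ω) (ω (s + 1 + l)) := by
  ext i
  refine Fin.lastCases ?_ (fun i => ?_) i
  · simp [bz]
  · simp [bz]

lemma init_bz (s : ℤ) (l : ℕ) (ω : ℤ → 𝕏) : Fin.init (bz s (l + 1) ω) = bz s l ω := by
  rw [bz_snoc, Fin.init_snoc]

lemma pblock_snoc_sum {μ : Measure (ℤ → 𝕏)} [IsProbabilityMeasure μ]
    (hT : MeasurePreserving shift μ μ) (l : ℕ) (u : Fin l → 𝕏) :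
    ∑ a, pblock μ (l + 1) (Fin.snoc u a) = pblock μ l u := by
  have h1 := integral_bz hT 0 (l + 1) (fun v => if Fin.init v = u then (1 : ℝ) else 0)
  have h2 := integral_bz hT 0 l (fun v => if v = u then (1 : ℝ) else 0)
  simp only [init_bz] at h1
  rw [h1, sum_snoc] at h2
  simpa using h2

lemma pblock_snoc_le {μ : Measure (ℤ → 𝕏)} [IsProbabilityMeasure μ]
    (hT : MeasurePreserving shift μ μ) (l : ℕ) (u : Fin l → 𝕏) (a : 𝕏) :
    pblock μ (l + 1) (Fin.snoc u a) ≤ pblock μ l u := by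
  rw [← pblock_snoc_sum hT l u]
  exact Finset.single_le_sum (f := fun a => pblock μ (l + 1) (Fin.snoc u a))
    (fun a _ => pblock_nonneg _ _ _) (Finset.mem_univ a)

lemma ae_pos {μ : Measure (ℤ → 𝕏)} [IsProbabilityMeasure μ]
    (hT : MeasurePreserving shift μ μ) :
    ∀ᵐ ω ∂μ, ∀ (s : ℤ) (l : ℕ), 0 < pblock μ l (bz s l ω) := by
  rw [ae_all_iff]; intro s
  rw [ae_all_iff]; intro l
  have : ∀ᵐ ω ∂μ, ∀ w : Fin l → 𝕏, pblock μ l w = 0 → bz s l ω ≠ w := by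
    rw [ae_all_iff]; intro w
    by_cases h : pblock μ l w = 0
    · have h0 : μ {ω | bz s l ω = w} = 0 := by
        rw [pblock_eq hT s] at h
        exact (measureReal_eq_zero_iff).1 h
      have := measure_eq_zero_iff_ae_notMem.1 h0
      filter_upwards [this] with ω hω _
      exact hω
    · exact Eventually.of_forall fun ω h' => absurd h' h
  filter_upwards [this] with ω hω
  refine lt_of_le_of_ne (pblock_nonneg _ _ _) fun h => ?_
  exact hω _ h.symm rfl

/-- conditional probability of the next symbol `ω 1` given the `j` last ones -/
noncomputable def gc (μ : Measure (ℤ → 𝕏)) (j : ℕ) (v : Fin (j + 1) → 𝕏) : ℝ :=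
  pblock μ (j + 1) v / pblock μ j (Fin.init v)

lemma gc_nonneg (μ : Measure (ℤ → 𝕏)) (j : ℕ) (v : Fin (j + 1) → 𝕏) : 0 ≤ gc μ j v :=
  div_nonneg (pblock_nonneg _ _ _) (pblock_nonneg _ _ _)

lemma gc_le_one {μ : Measure (ℤ → 𝕏)} [IsProbabilityMeasure μ]
    (hT : MeasurePreserving shift μ μ) (j : ℕ) (v : Fin (j + 1) → 𝕏) : gc μ j v ≤ 1 := by
  refine div_le_one_of_le₀ ?_ (pblock_nonneg _ _ _)
  have := pblock_snoc_le hT j (Fin.init v) (v (Fin.last j))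
  rwa [Fin.snoc_init_self] at this

/-- the same on sequences -/
noncomputable def gs (μ : Measure (ℤ → 𝕏)) (j : ℕ) (ω : ℤ → 𝕏) : ℝ := gc μ j (bz (-j) (j + 1) ω)

lemma gs_iter (μ : Measure (ℤ → 𝕏)) (j i : ℕ) (ω : ℤ → 𝕏) :
    gs μ j (shift^[i] ω) = gc μ j (bz (i - j) (j + 1) ω) := by
  rw [gs, bz_iter]; congr 2; ring

lemma logb_pblock {μ : Measure (ℤ → 𝕏)} (ω : ℤ → 𝕏)
    (hω : ∀ (s : ℤ) (l : ℕ), 0 < pblock μ l (bz s l ω)) (h0 : pblock μ 0 (bz 0 0 ω) = 1) (n : ℕ) :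
    Real.logb 2 (pblock μ n (blk 0 n ω)) =
      ∑ j ∈ Finset.range n, Real.logb 2 (gs μ j (shift^[j] ω)) := by
  simp only [blk_eq_bz, Nat.cast_zero]
  induction n with
  | zero => simp [h0]
  | succ n ih =>
    rw [Finset.sum_range_succ, ← ih, gs_iter, gc, sub_self, init_bz,
      Real.logb_div (hω _ _).ne' (hω _ _).ne']
    ring

lemma integral_gs {μ : Measure (ℤ → 𝕏)} [IsProbabilityMeasure μ]
    (hT : MeasurePreserving shift μ μ) (j : ℕ) :
    ∫ ω, -Real.logb 2 (gs μ j ω) ∂μ = Hblock μ (j + 1) - Hblock μ j := by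
  have h1 := integral_bz hT (-j) (j + 1) (fun v => Real.logb 2 (pblock μ (j + 1) v))
  have h2 := integral_bz hT (-j) j (fun v => Real.logb 2 (pblock μ j v))
  have i1 := integrable_bz (μ := μ) (-j) (j + 1) (fun v => Real.logb 2 (pblock μ (j + 1) v))
  have i2 := integrable_bz (μ := μ) (-j) j (fun v => Real.logb 2 (pblock μ j v))
  have : ∫ ω, -Real.logb 2 (gs μ j ω) ∂μ = ∫ ω, (Real.logb 2 (pblock μ j (bz (-j) j ω)) -
      Real.logb 2 (pblock μ (j + 1) (bz (-j) (j + 1) ω))) ∂μ := by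
    refine integral_congr_ae ?_
    filter_upwards [ae_pos hT] with ω hω
    rw [gs, gc, init_bz, Real.logb_div (hω _ _).ne' (hω _ _).ne']
    ring
  rw [this, integral_sub i2 i1, h1, h2]
  simp only [Hblock, Hent]
  ring

lemma integral_inv_gs {μ : Measure (ℤ → 𝕏)} [IsProbabilityMeasure μ]
    (hT : MeasurePreserving shift μ μ) (j : ℕ) :
    ∫ ω, (gs μ j ω)⁻¹ ∂μ ≤ Fintype.card 𝕏 := by
  have := integral_bz hT (-j) (j + 1) (fun v => (gc μ j v)⁻¹)
  simp only [gs]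
  rw [this, sum_snoc]
  calc _ ≤ ∑ u : Fin j → 𝕏, ∑ a : 𝕏, pblock μ j u := by
        refine Finset.sum_le_sum fun u _ => Finset.sum_le_sum fun a _ => ?_
        rw [gc, Fin.init_snoc]
        rcases eq_or_ne (pblock μ (j + 1) (Fin.snoc u a : Fin (j + 1) → 𝕏)) 0 with h | h
        · rw [h]; simpa using pblock_nonneg μ j u
        · rw [inv_div, mul_div_cancel₀ _ h]
    _ = _ := by
        simp only [Finset.sum_const, nsmul_eq_mul]
        rw [← Finset.mul_sum, pblock_sum hT]; simp

/-- the filtration of finite pasts -/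
def pastF : Filtration ℕ (inferInstance : MeasurableSpace (ℤ → 𝕏)) where
  seq j := MeasurableSpace.comap (bz (-j) j) inferInstance
  mono' := by
    refine monotone_nat_of_le_succ fun j => ?_
    have : bz (𝕏 := 𝕏) (-j) j = Fin.tail ∘ bz (-(j + 1 : ℕ)) (j + 1) := by
      funext ω
      ext i
      simp only [bz, Fin.tail, Function.comp]
      congr 1
      simp
      ring
    rw [this, ← MeasurableSpace.comap_comp]
    refine MeasurableSpace.comap_mono ?_
    exact (Measurable.of_discrete (f := (Fin.tail : (Fin (j + 1) → 𝕏) → (Fin j → 𝕏)))).comap_le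
  le' j := (measurable_bz (-j) j).comap_le

lemma gs_condExp {μ : Measure (ℤ → 𝕏)} [IsProbabilityMeasure μ]
    (hT : MeasurePreserving shift μ μ) (j : ℕ) (a : 𝕏) :
    (fun ω => gc μ j (Fin.snoc (bz (-j) j ω) a)) =ᵐ[μ]
      μ[fun ω => if ω 1 = a then (1 : ℝ) else 0 | pastF j] := by
  have hlast : ∀ ω : ℤ → 𝕏, ω 1 = bz (-j) (j + 1) ω (Fin.last j) := by
    intro ω; simp only [bz]; congr 1; simp
  have hf : (fun ω : ℤ → 𝕏 => if ω 1 = a then (1 : ℝ) else 0) =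
      fun ω => (fun v : Fin (j + 1) → 𝕏 => if v (Fin.last j) = a then (1 : ℝ) else 0)
        (bz (-j) (j + 1) ω) := by
    funext ω; simp only [← hlast]
  have hgi := integrable_bz (μ := μ) (-j) j (fun u => gc μ j (Fin.snoc u a))
  have hfi : Integrable (fun ω : ℤ → 𝕏 => if ω 1 = a then (1 : ℝ) else 0) μ := by
    rw [hf]; exact integrable_bz (-j) (j + 1) (fun v : Fin (j + 1) → 𝕏 => if v (Fin.last j) = a then (1 : ℝ) else 0)
  refine ae_eq_condExp_of_forall_setIntegral_eq (pastF.le j) hfi (fun s _ _ => hgi.integrableOn)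
    ?_ ?_
  · rintro s ⟨S, hS, rfl⟩ _
    have hS' := measurable_bz (-j) j hS
    classical
    rw [← integral_indicator hS', ← integral_indicator hS']
    have e1 := integral_bz hT (-j) j (fun u => if u ∈ S then gc μ j (Fin.snoc u a) else 0)
    have e2 := integral_bz hT (-j) (j + 1) (fun v => if Fin.init v ∈ S then
      (if v (Fin.last j) = a then (1 : ℝ) else 0) else 0)
    have d1 : (Set.indicator (bz (-j) j ⁻¹' S) fun ω => gc μ j (Fin.snoc (bz (-j) j ω) a)) =
      fun ω => (if bz (-j) j ω ∈ S then gc μ j (Fin.snoc (bz (-j) j ω) a) else 0) := by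
      funext ω; simp [Set.indicator]
    have d2 : (Set.indicator (bz (-j) j ⁻¹' S) fun ω : ℤ → 𝕏 => if ω 1 = a then (1 : ℝ) else 0) =
      fun ω => (if Fin.init (bz (-j) (j + 1) ω) ∈ S then
      (if bz (-j) (j + 1) ω (Fin.last j) = a then (1 : ℝ) else 0) else 0) := by
      funext ω; simp only [init_bz, ← hlast, Set.indicator, Set.mem_preimage]
    rw [d1, d2, e1, e2, sum_snoc]
    refine Finset.sum_congr rfl fun u _ => ?_
    simp only [Fin.init_snoc, Fin.snoc_last]
    by_cases hu : u ∈ S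
    · simp only [hu, if_true]
      simp only [mul_ite, mul_one, mul_zero, Finset.sum_ite_eq', Finset.mem_univ, if_true]
      rw [gc, Fin.init_snoc]
      rcases eq_or_ne (pblock μ j u) 0 with h | h
      · have h1 := pblock_snoc_le hT j u a
        have h2 := pblock_nonneg μ (j + 1) (Fin.snoc u a)
        rw [h] at h1 ⊢
        rw [zero_mul]; linarith
      · rw [mul_div_cancel₀ _ h]
    · simp [hu]
  · refine StronglyMeasurable.aestronglyMeasurable ?_
    refine Measurable.stronglyMeasurable ?_
    have : Measurable[pastF j] (bz (𝕏 := 𝕏) (-j) j) := comap_measurable _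
    exact (Measurable.of_discrete (f := fun u : Fin j → 𝕏 => gc μ j (Fin.snoc u a))).comp this

lemma gs_tendsto {μ : Measure (ℤ → 𝕏)} [IsProbabilityMeasure μ]
    (hT : MeasurePreserving shift μ μ) :
    ∀ᵐ ω ∂μ, ∃ L, Tendsto (fun j => gs μ j ω) atTop (nhds L) := by
  have h1 : ∀ᵐ ω ∂μ, ∀ a : 𝕏, ∀ j : ℕ, gc μ j (Fin.snoc (bz (-j) j ω) a) =
      (μ[fun ω => if ω 1 = a then (1 : ℝ) else 0 | pastF j]) ω := by
    rw [ae_all_iff]; intro a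
    rw [ae_all_iff]; intro j
    exact gs_condExp hT j a
  have h2 : ∀ᵐ ω ∂μ, ∀ a : 𝕏, Tendsto (fun j =>
      (μ[fun ω => if ω 1 = a then (1 : ℝ) else 0 | pastF j]) ω) atTop (nhds
      ((μ[fun ω => if ω 1 = a then (1 : ℝ) else 0 | ⨆ j, pastF j]) ω)) := by
    rw [ae_all_iff]; intro a
    exact tendsto_ae_condExp _
  filter_upwards [h1, h2] with ω h1 h2
  refine ⟨_, (h2 (ω 1)).congr fun j => ?_⟩
  rw [← h1, gs, bz_snoc]
  congr 3
  ring

lemma iInf_tendsto {u : ℕ → ℝ} {a : ℝ} (hu : Tendsto u atTop (nhds a)) (h0 : ∀ j, 0 ≤ u j) :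
    Tendsto (fun M => ⨅ j, u (M + j)) atTop (nhds a) := by
  rw [Metric.tendsto_atTop] at hu ⊢
  intro e he
  obtain ⟨N, hN⟩ := hu (e / 2) (by linarith)
  refine ⟨N, fun M hM => ?_⟩
  have hb : BddBelow (Set.range fun j => u (M + j)) := ⟨0, by rintro _ ⟨j, rfl⟩; exact h0 _⟩
  have h1 : ⨅ j, u (M + j) ≤ u (M + 0) := ciInf_le hb 0
  have h2 : a - e / 2 ≤ ⨅ j, u (M + j) := le_ciInf fun j => by
    have := hN (M + j) (by omega)
    rw [Real.dist_eq, abs_lt] at this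
    linarith [this.1]
  have h3 := hN (M + 0) (by omega)
  rw [Real.dist_eq, abs_lt] at *
  constructor <;> linarith [h3.2]

lemma logb_trunc {g β : ℝ} (hg : 0 < g) (hβ : 0 < β) :
    -Real.logb 2 g ≤ -Real.logb 2 (max g β) + 2 * β * g⁻¹ := by
  rcases le_total β g with h | h
  · rw [max_eq_left h]
    have : 0 ≤ 2 * β * g⁻¹ := by positivity
    linarith
  · rw [max_eq_right h]
    have h1 : Real.logb 2 (β / g) ≤ 2 * (β / g) := by
      rw [Real.logb, div_le_iff₀ (Real.log_pos (by norm_num))]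
      have h2 := Real.log_le_sub_one_of_pos (div_pos hβ hg)
      have h3 := Real.log_two_gt_d9
      have h4 : 0 < β / g := div_pos hβ hg
      nlinarith
    rw [Real.logb_div hβ.ne' hg.ne'] at h1
    have : 2 * β * g⁻¹ = 2 * (β / g) := by rw [div_eq_mul_inv]; ring
    linarith

lemma cesaro_freq {H : ℕ → ℝ} {h : ℝ} (hr : Tendsto (fun k => H k / k) atTop (nhds h)) {c : ℝ}
    (hc : c < h) (m : ℕ) : ∃ j ≥ m, c < H (j + 1) - H j := by
  by_contra! hcon
  have h1 : ∀ k, H (m + k) ≤ H m + k * c := by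
    intro k
    induction k with
    | zero => simp
    | succ k ih =>
      have := hcon (m + k) (by omega)
      push_cast
      rw [← add_assoc]
      linarith
  have hr' : Tendsto (fun k : ℕ => H (m + k) / ((m + k : ℕ) : ℝ)) atTop (nhds h) := by
    have := hr.comp (tendsto_add_atTop_nat m)
    refine this.congr fun k => ?_
    simp [add_comm]
  have ht : Tendsto (fun k : ℕ => (H m - m * c) / ((m + k : ℕ) : ℝ) + c) atTop (nhds (0 + c)) := by
    refine Tendsto.add_const _ ?_
    refine tendsto_const_nhds.div_atTop ?_
    refine tendsto_natCast_atTop_atTop.comp ?_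
    exact tendsto_atTop_mono (fun k => by simp) tendsto_id
  rw [zero_add] at ht
  have : h ≤ c := by
    refine le_of_tendsto_of_tendsto hr' ht ?_
    filter_upwards [eventually_gt_atTop 0] with k hk
    have hp : (0 : ℝ) < ((m + k : ℕ) : ℝ) := by exact_mod_cast (by omega)
    rw [div_add' _ _ _ hp.ne']
    refine div_le_div_of_nonneg_right ?_ hp.le
    have := h1 k
    push_cast
    linarith
  linarith

lemma cesaro_freq' {H : ℕ → ℝ} {h : ℝ} (hr : Tendsto (fun k => H k / k) atTop (nhds h)) {c : ℝ}
    (hc : h < c) (m : ℕ) : ∃ j ≥ m, H (j + 1) - H j < c := by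
  have : Tendsto (fun k => (fun k => - H k) k / k) atTop (nhds (-h)) := by
    refine hr.neg.congr fun k => ?_
    simp [neg_div]
  obtain ⟨j, hj, h1⟩ := cesaro_freq this (c := -c) (by linarith) m
  exact ⟨j, hj, by linarith⟩

/-- lower half of the Shannon-McMillan-Breiman theorem -/
lemma smb_lower {μ : Measure (ℤ → 𝕏)} [IsProbabilityMeasure μ]
    (herg : Ergodic shift μ) {h : ℝ}
    (hrate : Tendsto (fun k => Hblock μ k / k) atTop (nhds h)) {c : ℝ} (hc : c < h) :
    ∀ᵐ ω ∂μ, ∀ᶠ n : ℕ in atTop, Real.logb 2 (pblock μ n (blk 0 n ω)) ≤ -(n * c) := by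
  have hT := herg.toMeasurePreserving
  obtain ⟨c1, hc1, hc1h⟩ := exists_between hc
  obtain ⟨c2, hc2, hc2h⟩ := exists_between hc1h
  obtain ⟨c3, hc3, hc3h⟩ := exists_between hc2h
  set q : ℝ := ((Fintype.card 𝕏 : ℕ) : ℝ) with hq
  have hqpos : 0 < q := by rw [hq]; exact_mod_cast Fintype.card_pos
  obtain ⟨β, hβ0, hβ1, hβ⟩ : ∃ β : ℝ, 0 < β ∧ β ≤ 1 ∧ 2 * β * q ≤ c3 - c2 := by
    refine ⟨min 1 ((c3 - c2) / (2 * q)), lt_min one_pos (div_pos (by linarith) (by linarith)),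
      min_le_left _ _, ?_⟩
    have := min_le_right 1 ((c3 - c2) / (2 * q))
    rw [le_div_iff₀ (by linarith)] at this
    linarith
  set u : ℕ → (ℤ → 𝕏) → ℝ := fun j ω => -Real.logb 2 (max (gs μ j ω) β) with hu
  have hgm : ∀ j, Measurable (gs μ j) := fun j =>
    (Measurable.of_discrete (f := gc μ j)).comp (measurable_bz _ _)
  have hum : ∀ j, Measurable (u j) := fun j =>
    ((Real.measurable_log.comp ((hgm j).max measurable_const)).div_const _).neg
  have hu0 : ∀ j ω, 0 ≤ u j ω := by
    intro j ω
    have : Real.logb 2 (max (gs μ j ω) β) ≤ 0 :=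
      Real.logb_nonpos (by norm_num) (le_max_of_le_right hβ0.le)
        (max_le (gc_le_one hT _ _) hβ1)
    simp only [hu]; linarith
  set B : ℝ := -Real.logb 2 β with hB
  have huB : ∀ j ω, u j ω ≤ B := by
    intro j ω
    have := Real.logb_le_logb_of_le (b := 2) (by norm_num) hβ0 (le_max_right (gs μ j ω) β)
    simp only [hu, hB]; linarith
  set f : ℕ → (ℤ → 𝕏) → ℝ := fun M ω => ⨅ j, u (M + j) ω with hf
  have hbdd : ∀ M ω, BddBelow (Set.range fun j => u (M + j) ω) :=
    fun M ω => ⟨0, by rintro _ ⟨j, rfl⟩; exact hu0 _ _⟩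
  have hfm : ∀ M, Measurable (f M) := fun M => Measurable.iInf fun j => hum _
  have hf0 : ∀ M ω, 0 ≤ f M ω := fun M ω => le_ciInf fun j => hu0 _ _
  have hfu : ∀ M j ω, M ≤ j → f M ω ≤ u j ω := by
    intro M j ω hj
    obtain ⟨i, rfl⟩ := Nat.exists_eq_add_of_le hj
    exact ciInf_le (hbdd M ω) i
  have hfB : ∀ M ω, f M ω ≤ B := fun M ω => (hfu M M ω le_rfl).trans (huB _ _)
  have hconv : ∀ᵐ ω ∂μ, ∃ L, Tendsto (fun j => u j ω) atTop (nhds L) := by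
    filter_upwards [gs_tendsto hT] with ω hω
    obtain ⟨L, hL⟩ := hω
    refine ⟨-Real.logb 2 (max L β), ?_⟩
    have h1 : Tendsto (fun j => max (gs μ j ω) β) atTop (nhds (max L β)) :=
      hL.max tendsto_const_nhds
    exact ((h1.log (lt_max_of_lt_right hβ0).ne').div_const _).neg
  have hdiff : Tendsto (fun M => ∫ ω, (u M ω - f M ω) ∂μ) atTop (nhds (∫ ω, (0 : ℝ) ∂μ)) := by
    refine tendsto_integral_of_dominated_convergence (fun _ => B) ?_ (integrable_const _) ?_ ?_
    · exact fun M => ((hum M).sub (hfm M)).aestronglyMeasurable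
    · intro M
      refine Eventually.of_forall fun ω => ?_
      have h1 := hfu M M ω le_rfl
      have h2 := hf0 M ω
      have h3 := huB M ω
      rw [Real.norm_eq_abs, abs_le]
      constructor <;> linarith [hu0 M ω]
    · filter_upwards [hconv] with ω hω
      obtain ⟨L, hL⟩ := hω
      have := hL.sub (iInf_tendsto hL (fun j => hu0 j ω))
      simpa using this
  rw [integral_zero] at hdiff
  have hui : ∀ j, Integrable (u j) μ := fun j =>
    Integrable.of_bound (hum j).aestronglyMeasurable B (Eventually.of_forall fun ω => by
      rw [Real.norm_eq_abs, abs_of_nonneg (hu0 _ _)]; exact huB _ _)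
  have hfi : ∀ j, Integrable (f j) μ := fun j =>
    Integrable.of_bound (hfm j).aestronglyMeasurable B (Eventually.of_forall fun ω => by
      rw [Real.norm_eq_abs, abs_of_nonneg (hf0 _ _)]; exact hfB _ _)
  obtain ⟨m, hm⟩ := (hdiff.eventually (gt_mem_nhds (show (0 : ℝ) < c2 - c1 by linarith))).exists_forall_of_atTop
  obtain ⟨M, hMm, hM⟩ := cesaro_freq hrate hc3h m
  have hIntg : c1 < ∫ ω, f M ω ∂μ := by
    have h1 := hm M hMm
    rw [integral_sub (hui M) (hfi M)] at h1
    have h2 : ∫ ω, -Real.logb 2 (gs μ M ω) ∂μ ≤ ∫ ω, (u M ω + 2 * β * (gs μ M ω)⁻¹) ∂μ := by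
      refine integral_mono_ae ?_ ?_ ?_
      · exact integrable_bz (-M) (M + 1) (fun v => -Real.logb 2 (gc μ M v))
      · exact (hui M).add ((integrable_bz (-M) (M + 1) (fun v => (gc μ M v)⁻¹)).const_mul _)
      · filter_upwards [ae_pos hT] with ω hω
        refine logb_trunc ?_ hβ0
        rw [gs, gc, init_bz]
        exact div_pos (hω _ _) (hω _ _)
    have hinv : Integrable (fun ω => 2 * β * (gs μ M ω)⁻¹) μ :=
      (integrable_bz (-M) (M + 1) (fun v => (gc μ M v)⁻¹)).const_mul _
    rw [integral_gs hT, integral_add (hui M) hinv, integral_const_mul] at h2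
    have h3 := mul_le_mul_of_nonneg_left (integral_inv_gs hT M) (show 0 ≤ 2 * β by linarith)
    linarith
  have hbir := birk_lower herg (hfm M) (B := B) (fun ω => by
    rw [abs_of_nonneg (hf0 _ _)]; exact hfB _ _) hIntg
  have h0 : ∀ w, pblock μ 0 w = 1 := by
    intro w
    have := pblock_sum hT (μ := μ) 0
    rw [Fintype.sum_subsingleton _ w] at this
    exact this
  filter_upwards [hbir, ae_pos hT] with ω h1 h2
  have ht : Tendsto (fun n : ℕ => (n : ℝ) * (c1 - c)) atTop atTop :=
    tendsto_natCast_atTop_atTop.atTop_mul_const (by linarith)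
  filter_upwards [h1, ht.eventually_ge_atTop (M * B), eventually_ge_atTop M] with n hn hn2 hn3
  rw [logb_pblock ω h2 (h0 _)]
  have h4 : ∑ j ∈ Finset.range n, f M (shift^[j] ω) ≤
      ∑ j ∈ Finset.range n, (-Real.logb 2 (gs μ j (shift^[j] ω)) + if j < M then B else 0) := by
    refine Finset.sum_le_sum fun j _ => ?_
    have hgp : 0 < gs μ j (shift^[j] ω) := by
      rw [gs_iter, gc, init_bz]
      exact div_pos (h2 _ _) (h2 _ _)
    split_ifs with hj
    · have h5 : Real.logb 2 (gs μ j (shift^[j] ω)) ≤ 0 :=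
        Real.logb_nonpos (by norm_num) hgp.le (gc_le_one hT _ _)
      linarith [hfB M (shift^[j] ω)]
    · have h5 := hfu M j (shift^[j] ω) (by omega)
      have h6 := Real.logb_le_logb_of_le (b := 2) (by norm_num) hgp
        (le_max_left (gs μ j (shift^[j] ω)) β)
      simp only [hu] at h5
      linarith
  rw [Finset.sum_add_distrib, Finset.sum_neg_distrib, ← Finset.sum_filter] at h4
  have h7 : (Finset.range n).filter (fun j => j < M) = Finset.range M := by
    ext j; simp; omega
  rw [h7] at h4
  simp only [Finset.sum_const, Finset.card_range, nsmul_eq_mul] at h4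
  linarith

lemma smooth_sum {a : ℕ → ℝ} {B : ℝ} (h0 : ∀ j, 0 ≤ a j) (hB : ∀ j, a j ≤ B) (k L : ℕ)
    (hL : 0 < L) :
    ∑ j ∈ Finset.range k, a j ≤
      ∑ j ∈ Finset.range k, (∑ l ∈ Finset.range L, a (l + j)) / L + L * B := by
  have hB0 : 0 ≤ B := (h0 0).trans (hB 0)
  have hL' : (0 : ℝ) < L := by exact_mod_cast hL
  have h1 : ∀ l ∈ Finset.range L,
      ∑ j ∈ Finset.range k, a j - L * B ≤ ∑ j ∈ Finset.range k, a (l + j) := by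
    intro l hl
    have h2 := Finset.sum_range_add a l k
    have h3 : ∑ j ∈ Finset.range k, a j ≤ ∑ j ∈ Finset.range (l + k), a j :=
      Finset.sum_le_sum_of_subset_of_nonneg
        (Finset.range_mono (by omega)) (fun j _ _ => h0 j)
    have h4 : ∑ j ∈ Finset.range l, a j ≤ l * B := by
      have := Finset.sum_le_sum (fun j (_ : j ∈ Finset.range l) => hB j)
      simpa using this
    have h5 : (l : ℝ) * B ≤ L * B := by
      have : (l : ℝ) ≤ L := by exact_mod_cast (Finset.mem_range.1 hl).le
      gcongr
    linarith
  have h6 := Finset.sum_le_sum h1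
  rw [Finset.sum_comm] at h6
  simp only [Finset.sum_const, Finset.card_range, nsmul_eq_mul] at h6
  rw [← Finset.sum_div]
  rw [← sub_le_iff_le_add, le_div_iff₀ hL']
  linarith

/-- smoothed transition probability -/
noncomputable def rk (μ : Measure (ℤ → 𝕏)) (m : ℕ) (η : ℝ) (v : Fin (m + 1) → 𝕏) : ℝ :=
  (1 - η) * gc μ m v + η / (Fintype.card 𝕏 : ℝ)

/-- smoothed Markov measure -/
noncomputable def Rk (μ : Measure (ℤ → 𝕏)) (m : ℕ) (η : ℝ) : (k : ℕ) → (Fin k → 𝕏) → ℝ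
  | 0, _ => 1
  | k + 1, w => Rk μ m η k (Fin.init w) *
      (if hm : m ≤ k then rk μ m η (fun i => w ⟨k - m + i, by omega⟩)
        else 1 / (Fintype.card 𝕏 : ℝ))

lemma card_pos' : (0 : ℝ) < (Fintype.card 𝕏 : ℝ) := by exact_mod_cast Fintype.card_pos

lemma rk_ge {μ : Measure (ℤ → 𝕏)} {m : ℕ} {η : ℝ} (h1 : η ≤ 1)
    (v : Fin (m + 1) → 𝕏) : η / (Fintype.card 𝕏 : ℝ) ≤ rk μ m η v := by
  have := mul_nonneg (sub_nonneg.2 h1) (gc_nonneg μ m v)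
  rw [rk]; linarith

lemma rk_pos {μ : Measure (ℤ → 𝕏)} {m : ℕ} {η : ℝ} (h0 : 0 < η) (h1 : η ≤ 1)
    (v : Fin (m + 1) → 𝕏) : 0 < rk μ m η v :=
  (div_pos h0 card_pos').trans_le (rk_ge h1 v)

lemma rk_sum {μ : Measure (ℤ → 𝕏)} [IsProbabilityMeasure μ]
    (hT : MeasurePreserving shift μ μ) {m : ℕ} {η : ℝ} (h0 : 0 < η) (h1 : η ≤ 1)
    (u : Fin m → 𝕏) : ∑ a, rk μ m η (Fin.snoc u a) ≤ 1 := by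
  simp only [rk, gc, Fin.init_snoc]
  rw [Finset.sum_add_distrib, ← Finset.mul_sum, ← Finset.sum_div, pblock_snoc_sum hT]
  simp only [Finset.sum_const, Finset.card_univ, nsmul_eq_mul]
  rw [mul_div_cancel₀ _ (card_pos' (𝕏 := 𝕏)).ne']
  have h2 : pblock μ m u / pblock μ m u ≤ 1 := div_self_le_one _
  nlinarith

lemma rk_le_one {μ : Measure (ℤ → 𝕏)} [IsProbabilityMeasure μ]
    (hT : MeasurePreserving shift μ μ) {m : ℕ} {η : ℝ} (h0 : 0 < η) (h1 : η ≤ 1)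
    (v : Fin (m + 1) → 𝕏) : rk μ m η v ≤ 1 := by
  have := rk_sum hT h0 h1 (Fin.init v)
  refine le_trans ?_ this
  have h2 := Finset.single_le_sum (f := fun a => rk μ m η (Fin.snoc (Fin.init v) a))
    (fun a _ => (rk_pos h0 h1 _).le) (Finset.mem_univ (v (Fin.last m)))
  simp only [Fin.snoc_init_self] at h2
  exact h2

lemma Rk_pos {μ : Measure (ℤ → 𝕏)} {m : ℕ} {η : ℝ} (h0 : 0 < η) (h1 : η ≤ 1) (k : ℕ) :
    ∀ w : Fin k → 𝕏, 0 < Rk μ m η k w := by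
  induction k with
  | zero => intro w; simp [Rk]
  | succ k ih =>
    intro w
    rw [Rk]
    refine mul_pos (ih _) ?_
    split_ifs
    · exact rk_pos h0 h1 _
    · exact div_pos one_pos card_pos'

lemma Rk_sum {μ : Measure (ℤ → 𝕏)} [IsProbabilityMeasure μ]
    (hT : MeasurePreserving shift μ μ) {m : ℕ} {η : ℝ} (h0 : 0 < η) (h1 : η ≤ 1) (k : ℕ) :
    ∑ w, Rk μ m η k w ≤ 1 := by
  induction k with
  | zero => simp [Rk]
  | succ k ih =>
    rw [sum_snoc]
    refine le_trans (Finset.sum_le_sum fun u _ => ?_) ih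
    simp only [Rk, Fin.init_snoc]
    rw [← Finset.mul_sum]
    refine mul_le_of_le_one_right (Rk_pos h0 h1 k u).le ?_
    split_ifs with hm
    · refine le_trans (le_of_eq ?_) (rk_sum hT h0 h1 (fun i : Fin m => u ⟨k - m + i, by omega⟩))
      refine Finset.sum_congr rfl fun a _ => ?_
      congr 1
      ext i
      refine Fin.lastCases ?_ (fun i => ?_) i
      · have : (⟨k - m + (Fin.last m : ℕ), by simp; omega⟩ : Fin (k + 1)) = Fin.last k := by
          ext; simp; omega
        simp only [Fin.snoc_last]
        rw [this, Fin.snoc_last]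
      · have : (⟨k - m + (i.castSucc : ℕ), by simp; omega⟩ : Fin (k + 1)) =
          Fin.castSucc ⟨k - m + i, by omega⟩ := by
          ext; simp
        rw [this]
        simp only [Fin.snoc_castSucc]
    · simp only [Finset.sum_const, Finset.card_univ, nsmul_eq_mul]
      rw [mul_div_cancel₀ _ (card_pos' (𝕏 := 𝕏)).ne']

/-- information function of the smoothed Markov measure -/
noncomputable def phk (μ : Measure (ℤ → 𝕏)) (m : ℕ) (η : ℝ) (ω : ℤ → 𝕏) : ℝ :=
  -Real.logb 2 (rk μ m η (bz (-m) (m + 1) ω))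

lemma phk_nonneg {μ : Measure (ℤ → 𝕏)} [IsProbabilityMeasure μ]
    (hT : MeasurePreserving shift μ μ) {m : ℕ} {η : ℝ} (h0 : 0 < η) (h1 : η ≤ 1) (ω : ℤ → 𝕏) :
    0 ≤ phk μ m η ω := by
  have : Real.logb 2 (rk μ m η (bz (-m) (m + 1) ω)) ≤ 0 :=
    Real.logb_nonpos (by norm_num) (rk_pos h0 h1 _).le (rk_le_one hT h0 h1 _)
  rw [phk]; linarith

lemma phk_le {μ : Measure (ℤ → 𝕏)} {m : ℕ} {η : ℝ} (h0 : 0 < η) (h1 : η ≤ 1) (ω : ℤ → 𝕏) :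
    phk μ m η ω ≤ -Real.logb 2 (η / (Fintype.card 𝕏 : ℝ)) := by
  have := Real.logb_le_logb_of_le (b := 2) (by norm_num) (div_pos h0 card_pos')
    (rk_ge (μ := μ) h1 (bz (-m) (m + 1) ω))
  rw [phk]; linarith

lemma logb_Rk {μ : Measure (ℤ → 𝕏)} [IsProbabilityMeasure μ]
    (hT : MeasurePreserving shift μ μ) {m : ℕ} {η : ℝ} (h0 : 0 < η) (h1 : η ≤ 1)
    (s : ℕ) (ω : ℤ → 𝕏) (k : ℕ) :
    -Real.logb 2 (Rk μ m η k (blk s k ω)) ≤ ∑ j ∈ Finset.range k, phk μ m η (shift^[s + j] ω) +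
      (min k m : ℕ) * Real.logb 2 (Fintype.card 𝕏) := by
  rw [blk_eq_bz]
  induction k with
  | zero => simp [Rk]
  | succ k ih =>
    rw [Rk, init_bz, Finset.sum_range_succ]
    split_ifs with hm
    · have e : (fun i : Fin (m + 1) => bz (s : ℤ) (k + 1) ω ⟨k - m + i, by omega⟩) =
          bz (-m) (m + 1) (shift^[s + k] ω) := by
        rw [bz_iter]
        ext i
        simp only [bz]
        congr 1
        push_cast [hm]
        ring
      rw [e, Real.logb_mul (Rk_pos h0 h1 _ _).ne' (rk_pos h0 h1 _).ne']
      have e2 : min (k + 1) m = min k m := by omega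
      rw [e2, phk]
      linarith
    · rw [Real.logb_mul (Rk_pos h0 h1 _ _).ne' (div_pos one_pos card_pos').ne', one_div,
        Real.logb_inv]
      have e2 : min (k + 1) m = min k m + 1 := by omega
      have := phk_nonneg hT (m := m) h0 h1 (shift^[s + k] ω)
      rw [e2]
      push_cast
      push_cast at ih
      linarith

lemma integral_phk {μ : Measure (ℤ → 𝕏)} [IsProbabilityMeasure μ]
    (hT : MeasurePreserving shift μ μ) {m : ℕ} {η : ℝ} (h0 : 0 < η) (h1 : η < 1) :
    ∫ ω, phk μ m η ω ∂μ ≤ -Real.logb 2 (1 - η) + (Hblock μ (m + 1) - Hblock μ m) := by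
  rw [← integral_gs hT]
  have i1 : Integrable (fun ω => -Real.logb 2 (gs μ m ω)) μ :=
    integrable_bz (-m) (m + 1) (fun v => -Real.logb 2 (gc μ m v))
  have e : -Real.logb 2 (1 - η) + ∫ ω, -Real.logb 2 (gs μ m ω) ∂μ =
      ∫ ω, (-Real.logb 2 (1 - η) + -Real.logb 2 (gs μ m ω)) ∂μ := by
    rw [integral_add (integrable_const _) i1]; simp
  rw [e]
  refine integral_mono_ae (integrable_bz (-m) (m + 1) (fun v => -Real.logb 2 (rk μ m η v)))
    ((integrable_const _).add i1) ?_
  filter_upwards [ae_pos hT] with ω hω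
  have hgp : 0 < gs μ m ω := by
    rw [gs, gc, init_bz]
    exact div_pos (hω _ _) (hω _ _)
  have h2 : 0 < (1 - η) * gs μ m ω := mul_pos (by linarith) hgp
  have h3 : (1 - η) * gs μ m ω ≤ rk μ m η (bz (-m) (m + 1) ω) := by
    rw [rk, gs]
    have := div_pos h0 (card_pos' (𝕏 := 𝕏))
    linarith
  have h4 := Real.logb_le_logb_of_le (b := 2) (by norm_num) h2 h3
  rw [Real.logb_mul (by linarith) hgp.ne'] at h4
  rw [phk]
  linarith

lemma pos_part {μ : Measure (ℤ → 𝕏)} [IsProbabilityMeasure μ]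
    (herg : Ergodic shift μ) {h : ℝ}
    (hrate : Tendsto (fun k => Hblock μ k / k) atTop (nhds h)) {c' δ : ℝ} (hc : h < c')
    (hδ : 0 < δ) :
    ∃ R : (k : ℕ) → (Fin k → 𝕏) → ℝ, (∀ k w, 0 < R k w) ∧ (∀ k, ∑ w, R k w ≤ 1) ∧
      ∀ᵐ ω ∂μ, ∀ᶠ k : ℕ in atTop, ∀ N : ℕ, 0 < N →
        ∑ i ∈ Finset.range N, max 0 (-Real.logb 2 (R k (blk (i * k) k ω)) - k * c') ≤
          (N * k : ℕ) * δ := by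
  have hT := herg.toMeasurePreserving
  obtain ⟨c, hc1, hc2⟩ := exists_between hc
  obtain ⟨c3, hc3, hc4⟩ := exists_between hc1
  obtain ⟨η, hη0, hη1, hη⟩ : ∃ η : ℝ, 0 < η ∧ η < 1 ∧ -Real.logb 2 (1 - η) ≤ c - c3 := by
    refine ⟨1 - 2 ^ (-(c - c3)), ?_, ?_, ?_⟩
    · have : (2 : ℝ) ^ (-(c - c3)) < 1 :=
        Real.rpow_lt_one_of_one_lt_of_neg (by norm_num) (by linarith)
      linarith
    · have : (0 : ℝ) < (2 : ℝ) ^ (-(c - c3)) := by positivity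
      linarith
    · rw [sub_sub_cancel, Real.logb_rpow (by norm_num) (by norm_num)]
      linarith
  obtain ⟨m, -, hm⟩ := cesaro_freq' hrate hc3 0
  have hIntg : ∫ ω, phk μ m η ω ∂μ < c := by
    have := integral_phk hT (m := m) hη0 hη1
    linarith
  set B : ℝ := -Real.logb 2 (η / (Fintype.card 𝕏 : ℝ)) with hB
  have hφ0 : ∀ ω, 0 ≤ phk μ m η ω := phk_nonneg hT hη0 hη1.le
  have hφB : ∀ ω, phk μ m η ω ≤ B := phk_le hη0 hη1.le
  have hφm : Measurable (phk μ m η) :=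
    (Measurable.of_discrete (f := fun v => -Real.logb 2 (rk μ m η v))).comp (measurable_bz _ _)
  set ψ : ℕ → (ℤ → 𝕏) → ℝ := fun L ω =>
    max 0 ((∑ l ∈ Finset.range L, phk μ m η (shift^[l] ω)) / L - c) with hψ
  have hψm : ∀ L, Measurable (ψ L) := fun L => by
    refine measurable_const.max (Measurable.sub_const (Measurable.div_const ?_ _) _)
    exact Finset.measurable_sum _ fun l _ => hφm.comp (hT.measurable.iterate l)
  have hψ0 : ∀ L ω, 0 ≤ ψ L ω := fun L ω => le_max_left _ _
  have hψB : ∀ L ω, ψ L ω ≤ B + |c| := by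
    intro L ω
    have hB0 : 0 ≤ B := (hφ0 ω).trans (hφB ω)
    refine max_le (by positivity) ?_
    have : (∑ l ∈ Finset.range L, phk μ m η (shift^[l] ω)) / L ≤ B := by
      refine div_le_of_le_mul₀ (by positivity) hB0 ?_
      have := Finset.sum_le_sum (fun j (_ : j ∈ Finset.range L) => hφB (shift^[j] ω))
      simpa [mul_comm] using this
    linarith [neg_abs_le c]
  have hlim : Tendsto (fun L => ∫ ω, ψ L ω ∂μ) atTop (nhds (∫ ω, (0 : ℝ) ∂μ)) := by
    refine tendsto_integral_of_dominated_convergence (fun _ => B + |c|) ?_ (integrable_const _) ?_ ?_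
    · exact fun L => (hψm L).aestronglyMeasurable
    · exact fun L => Eventually.of_forall fun ω => by
        rw [Real.norm_eq_abs, abs_of_nonneg (hψ0 _ _)]; exact hψB _ _
    · have := birk_upper herg hφm (B := B)
        (fun ω => by rw [abs_of_nonneg (hφ0 _)]; exact hφB _) hIntg
      filter_upwards [this] with ω hω
      refine tendsto_const_nhds.congr' ?_
      filter_upwards [hω, eventually_gt_atTop 0] with L hL hL0
      have hL' : (0 : ℝ) < L := by exact_mod_cast hL0
      simp only [hψ]
      rw [max_eq_left]
      rw [sub_nonpos, div_le_iff₀ hL']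
      linarith
  rw [integral_zero] at hlim
  obtain ⟨L, hL, hL0⟩ := ((hlim.eventually (gt_mem_nhds hδ)).and (eventually_gt_atTop 0)).exists
  refine ⟨Rk μ m η, Rk_pos hη0 hη1.le, Rk_sum hT hη0 hη1.le, ?_⟩
  have hbir := birk_upper herg (hψm L) (B := B + |c|)
    (fun ω => by rw [abs_of_nonneg (hψ0 _ _)]; exact hψB _ _) hL
  filter_upwards [hbir] with ω hω
  obtain ⟨n0, hn0⟩ := hω.exists_forall_of_atTop
  have ht : Tendsto (fun k : ℕ => (k : ℝ) * (c' - c)) atTop atTop :=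
    tendsto_natCast_atTop_atTop.atTop_mul_const (by linarith)
  filter_upwards [eventually_ge_atTop n0, eventually_ge_atTop m,
    ht.eventually_ge_atTop (L * B + m * Real.logb 2 (Fintype.card 𝕏))] with k hk1 hkm hk2 N hN
  have hblock : ∀ i ∈ Finset.range N,
      max 0 (-Real.logb 2 (Rk μ m η k (blk (i * k) k ω)) - k * c') ≤
        ∑ j ∈ Finset.range k, ψ L (shift^[i * k + j] ω) := by
    intro i _
    refine max_le (Finset.sum_nonneg fun j _ => hψ0 _ _) ?_
    have h1 := logb_Rk hT (m := m) hη0 hη1.le (i * k) ω k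
    rw [min_eq_right hkm] at h1
    have h2 := smooth_sum (a := fun j => phk μ m η (shift^[i * k + j] ω)) (B := B)
      (fun j => hφ0 _) (fun j => hφB _) k L hL0
    have h3 : ∑ j ∈ Finset.range k, ((∑ l ∈ Finset.range L,
        phk μ m η (shift^[i * k + (l + j)] ω)) / L - c) ≤
        ∑ j ∈ Finset.range k, ψ L (shift^[i * k + j] ω) := by
      refine Finset.sum_le_sum fun j _ => ?_
      refine le_trans (le_of_eq ?_) (le_max_right _ _)
      congr 2
      refine Finset.sum_congr rfl fun l _ => ?_
      rw [← Function.iterate_add_apply]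
      congr 2
      ring
    rw [Finset.sum_sub_distrib] at h3
    simp only [Finset.sum_const, Finset.card_range, nsmul_eq_mul] at h3
    linarith
  refine (Finset.sum_le_sum hblock).trans ?_
  have e : ∑ i ∈ Finset.range N, ∑ j ∈ Finset.range k, ψ L (shift^[i * k + j] ω) =
      ∑ j ∈ Finset.range (N * k), ψ L (shift^[j] ω) := by
    clear hN hblock
    induction N with
    | zero => simp
    | succ N ih =>
      rw [Finset.sum_range_succ, ih, Nat.succ_mul, Finset.sum_range_add]
  rw [e]
  exact hn0 _ (hk1.trans (Nat.le_mul_of_pos_left _ hN))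

lemma theta_exists {W : Type*} [Fintype W] [DecidableEq W] [Nonempty W] (q : W → ℝ)
    (h0 : ∀ w, 0 ≤ q w) (h1 : ∑ w, q w ≤ 1) (D : ℕ) (hD : 0 < D) :
    ∃ θ : Fin D → W, ∀ w, 1 / (D : ℝ) ≤ q w →
      q w / 2 ≤ ((Finset.univ.filter fun j => θ j = w).card : ℝ) / D := by
  have hD' : (0 : ℝ) < D := by exact_mod_cast hD
  set c : W → ℕ := fun w => ⌊(D : ℝ) * q w⌋₊ with hc
  have hcard : Fintype.card (Σ w, Fin (c w)) ≤ Fintype.card (Fin D) := by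
    simp only [Fintype.card_sigma, Fintype.card_fin]
    have : ((∑ w, c w : ℕ) : ℝ) ≤ (D : ℝ) := by
      push_cast
      calc ∑ w, (c w : ℝ) ≤ ∑ w, (D : ℝ) * q w :=
            Finset.sum_le_sum fun w _ => Nat.floor_le (mul_nonneg hD'.le (h0 w))
        _ = D * ∑ w, q w := by rw [Finset.mul_sum]
        _ ≤ D * 1 := by gcongr
        _ = D := mul_one _
    exact_mod_cast this
  obtain ⟨e⟩ := Function.Embedding.nonempty_of_card_le hcard
  refine ⟨Function.extend e Sigma.fst (fun _ => Classical.arbitrary W), fun w hw => ?_⟩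
  have hle : c w ≤ (Finset.univ.filter fun j =>
      Function.extend e Sigma.fst (fun _ => Classical.arbitrary W) j = w).card := by
    have : (Finset.univ.image fun i : Fin (c w) => e ⟨w, i⟩).card = c w := by
      rw [Finset.card_image_of_injective]
      · simp
      · intro i j hij
        have := e.injective hij
        simpa using this
    rw [← this]
    refine Finset.card_le_card ?_
    intro j hj
    simp only [Finset.mem_image, Finset.mem_univ, true_and, Finset.mem_filter] at hj ⊢
    obtain ⟨i, rfl⟩ := hj
    rw [e.injective.extend_apply]
  have hle' : (c w : ℝ) ≤ ((Finset.univ.filter fun j =>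
      Function.extend e Sigma.fst (fun _ => Classical.arbitrary W) j = w).card : ℝ) := by
    exact_mod_cast hle
  rw [div_le_div_iff₀ two_pos hD']
  have h2 : 1 ≤ (D : ℝ) * q w := by
    rw [div_le_iff₀ hD'] at hw; linarith
  have h3 : (1 : ℝ) ≤ c w := by
    have : 1 ≤ c w := Nat.le_floor (by simpa using h2)
    exact_mod_cast this
  have h4 := Nat.lt_floor_add_one ((D : ℝ) * q w)
  change (D : ℝ) * q w < (c w : ℝ) + 1 at h4
  linarith

/-- mixture distribution -/
noncomputable def mixQ {W : Type*} [DecidableEq W] (R : W → ℝ) {D : ℕ} (θ : Fin D → W) (w : W) : ℝ :=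
  R w / 2 + (((Finset.univ.filter fun j => θ j = w).card : ℝ) / D) / 2

lemma mixQ_pos {W : Type*} [DecidableEq W] {R : W → ℝ} (hR : ∀ w, 0 < R w) {D : ℕ}
    (θ : Fin D → W) (w : W) : 0 < mixQ R θ w := by
  have := hR w
  rw [mixQ]; positivity

lemma mixQ_sum {W : Type*} [Fintype W] [DecidableEq W] {R : W → ℝ} (hR : ∑ w, R w ≤ 1) {D : ℕ}
    (θ : Fin D → W) : ∑ w, mixQ R θ w ≤ 1 := by
  simp only [mixQ]
  rw [Finset.sum_add_distrib, ← Finset.sum_div, ← Finset.sum_div, ← Finset.sum_div]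
  have h1 : ∑ w, ((Finset.univ.filter fun j => θ j = w).card : ℝ) = D := by
    have := Finset.card_eq_sum_card_fiberwise (f := θ) (s := Finset.univ) (t := Finset.univ)
      (fun _ _ => Finset.mem_univ _)
    simp only [Finset.card_univ, Fintype.card_fin] at this
    exact_mod_cast this.symm
  rw [h1]
  have : (D : ℝ) / D ≤ 1 := div_self_le_one _
  linarith

lemma mixQ_log {W : Type*} [DecidableEq W] {R q : W → ℝ} (hR : ∀ w, 0 < R w) {D : ℕ} (hD : 0 < D)
    (θ : Fin D → W)
    (hθ : ∀ w, 1 / (D : ℝ) ≤ q w → q w / 2 ≤ ((Finset.univ.filter fun j => θ j = w).card : ℝ) / D)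
    (w : W) (hq : 0 < q w) :
    -Real.logb 2 (mixQ R θ w) ≤ -Real.logb 2 (q w) + 2 + max 0 (-Real.logb 2 (R w) - Real.logb 2 D) := by
  have hD' : (0 : ℝ) < D := by exact_mod_cast hD
  have hRw := hR w
  rcases le_or_gt (1 / (D : ℝ)) (q w) with h | h
  · have h1 : q w / 4 ≤ mixQ R θ w := by
      have := hθ w h
      rw [mixQ]; linarith
    have h2 := Real.logb_le_logb_of_le (b := 2) (by norm_num) (by positivity) h1
    have h3 : Real.logb 2 4 = 2 := by
      rw [show (4 : ℝ) = 2 ^ (2 : ℝ) by norm_num, Real.logb_rpow] <;> norm_num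
    rw [Real.logb_div hq.ne' (by norm_num), h3] at h2
    have := le_max_left 0 (-Real.logb 2 (R w) - Real.logb 2 D)
    linarith
  · have h1 : R w / 2 ≤ mixQ R θ w := by
      rw [mixQ]
      have : 0 ≤ ((Finset.univ.filter fun j => θ j = w).card : ℝ) / D / 2 := by positivity
      linarith
    have h2 := Real.logb_le_logb_of_le (b := 2) (by norm_num) (by positivity) h1
    rw [Real.logb_div hRw.ne' (by norm_num), Real.logb_self_eq_one (by norm_num)] at h2
    have h3 := Real.logb_le_logb_of_le (b := 2) (by norm_num) hq h.le
    rw [one_div, Real.logb_inv] at h3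
    have := le_max_right 0 (-Real.logb 2 (R w) - Real.logb 2 D)
    linarith

lemma emp_sum (k n : ℕ) (ω : ℤ → 𝕏) (F : (Fin k → 𝕏) → ℝ) (hN : 0 < n / k) :
    ∑ i ∈ Finset.range (n / k), F (blk (i * k) k ω) =
      (n / k : ℕ) * ∑ w, empDist k n ω w * F w := by
  have hN' : ((n / k : ℕ) : ℝ) ≠ 0 := by exact_mod_cast hN.ne'
  simp only [empDist, div_mul_eq_mul_div]
  rw [← Finset.sum_div, mul_div_cancel₀ _ hN']
  simp only [Finset.sum_mul]
  rw [Finset.sum_comm]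
  refine Finset.sum_congr rfl fun i _ => ?_
  simp

lemma emp_nonneg (k n : ℕ) (ω : ℤ → 𝕏) (w : Fin k → 𝕏) : 0 ≤ empDist k n ω w := by
  rw [empDist]
  refine div_nonneg (Finset.sum_nonneg fun i _ => ?_) (Nat.cast_nonneg _)
  split_ifs <;> norm_num

lemma emp_tot (k n : ℕ) (ω : ℤ → 𝕏) (hN : 0 < n / k) : ∑ w, empDist k n ω w = 1 := by
  have h1 := emp_sum k n ω (fun _ => 1) hN
  have hN' : ((n / k : ℕ) : ℝ) ≠ 0 := by exact_mod_cast hN.ne'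
  simp only [Finset.sum_const, Finset.card_range, nsmul_eq_mul, mul_one] at h1
  field_simp at h1
  linarith

lemma code_bound (k n : ℕ) (ω : ℤ → 𝕏) (hN : 0 < n / k) {R : (Fin k → 𝕏) → ℝ}
    (hR : ∀ w, 0 < R w) {D : ℕ} (hD : 0 < D) :
    ∃ θ : Fin D → (Fin k → 𝕏),
      -Real.logb 2 (∏ i ∈ Finset.range (n / k), mixQ R θ (blk (i * k) k ω)) ≤
        (n / k : ℕ) * (plugIn k n ω + 2) +
        ∑ i ∈ Finset.range (n / k), max 0 (-Real.logb 2 (R (blk (i * k) k ω)) - Real.logb 2 D) := by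
  obtain ⟨θ, hθ⟩ := theta_exists (empDist k n ω) (emp_nonneg k n ω) (emp_tot k n ω hN).le D hD
  refine ⟨θ, ?_⟩
  rw [Real.logb_prod _ _ (fun i _ => (mixQ_pos hR θ _).ne'), ← Finset.sum_neg_distrib]
  rw [emp_sum k n ω (fun w => -Real.logb 2 (mixQ R θ w)) hN,
    emp_sum k n ω (fun w => max 0 (-Real.logb 2 (R w) - Real.logb 2 D)) hN, ← mul_add]
  refine mul_le_mul_of_nonneg_left ?_ (Nat.cast_nonneg _)
  have h2 : plugIn k n ω + 2 = ∑ w, empDist k n ω w * (-Real.logb 2 (empDist k n ω w) + 2) := by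
    simp only [mul_add, Finset.sum_add_distrib, ← Finset.sum_mul, emp_tot k n ω hN, plugIn, Hent,
      mul_neg, Finset.sum_neg_distrib]
    ring
  rw [h2, ← Finset.sum_add_distrib]
  refine Finset.sum_le_sum fun w _ => ?_
  rw [← mul_add]
  rcases (emp_nonneg k n ω w).eq_or_lt with h | h
  · rw [← h]; simp
  · exact mul_le_mul_of_nonneg_left (mixQ_log hR hD θ hθ w h) h.le

def Bls (N k : ℕ) (ω : ℤ → 𝕏) : Fin N → Fin k → 𝕏 := fun i => blk (i * k) k ω

lemma bls_iff (N k : ℕ) (ω ω' : ℤ → 𝕏) :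
    Bls N k ω' = Bls N k ω ↔ blk 0 (N * k) ω' = blk 0 (N * k) ω := by
  constructor
  · intro h
    ext t
    have hk : 0 < k := by
      rcases Nat.eq_zero_or_pos k with h | h
      · subst h; exact absurd t.2 (by simp)
      · exact h
    have h1 : (t : ℕ) / k < N := (Nat.div_lt_iff_lt_mul hk).2 t.2
    have h2 := congrFun (congrFun h ⟨t / k, h1⟩) ⟨t % k, Nat.mod_lt _ hk⟩
    have e : (((t : ℕ) / k * k : ℕ) : ℤ) + 1 + ((t : ℕ) % k : ℕ) = ((0 : ℕ) : ℤ) + 1 + (t : ℕ) := by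
      rw [add_right_comm, ← Nat.cast_add, Nat.div_add_mod']
      push_cast; ring
    simp only [Bls, blk] at h2 ⊢
    rwa [e] at h2
  · intro h
    funext i j
    have h1 : (i : ℕ) * k + j < N * k := by
      have h2 : ((i : ℕ) + 1) * k ≤ N * k := Nat.mul_le_mul_right _ i.2
      have := j.2
      rw [Nat.succ_mul] at h2
      omega
    have h2 := congrFun h ⟨i * k + j, h1⟩
    have e : ((0 : ℕ) : ℤ) + 1 + ((i * k + j : ℕ) : ℤ) = ((i * k : ℕ) : ℤ) + 1 + (j : ℕ) := by
      push_cast; ring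
    simp only [Bls, blk] at h2 ⊢
    rwa [e] at h2

lemma sum_prod_le {W : Type*} [Fintype W] (N : ℕ) {Q : W → ℝ} (hQ0 : ∀ w, 0 ≤ Q w)
    (hQ1 : ∑ w, Q w ≤ 1) (Y : Finset (Fin N → W)) : ∑ y ∈ Y, ∏ i, Q (y i) ≤ 1 := by
  classical
  have h0 : ∀ y : Fin N → W, 0 ≤ ∏ i, Q (y i) := fun y => Finset.prod_nonneg fun i _ => hQ0 _
  calc ∑ y ∈ Y, ∏ i, Q (y i) ≤ ∑ y : Fin N → W, ∏ i, Q (y i) := Finset.sum_le_univ_sum_of_nonneg h0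
    _ = (∑ w, Q w) ^ N := by rw [Fintype.sum_pow]
    _ ≤ 1 := pow_le_one₀ (Finset.sum_nonneg fun w _ => hQ0 w) hQ1

lemma count_abs {Ω W : Type*} [Fintype W] [MeasurableSpace Ω] {μ : Measure Ω}
    [IsProbabilityMeasure μ] (N : ℕ) {Q : W → ℝ} (hQ0 : ∀ w, 0 ≤ Q w)
    (hQ1 : ∑ w, Q w ≤ 1) {α β : ℝ} (hα : 0 < α) (hβ : 0 ≤ β) (B : Ω → Fin N → W) :
    μ.real {ω | α ≤ ∏ i, Q (B ω i) ∧ μ.real {ω' | B ω' = B ω} ≤ β} ≤ β / α := by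
  classical
  set Y : Finset (Fin N → W) := Finset.univ.filter fun y =>
    α ≤ ∏ i, Q (y i) ∧ μ.real {ω' | B ω' = y} ≤ β with hY
  have hsub : {ω | α ≤ ∏ i, Q (B ω i) ∧ μ.real {ω' | B ω' = B ω} ≤ β} ⊆
      ⋃ y ∈ Y, {ω | B ω = y} := by
    rintro ω h1
    simp only [Set.mem_iUnion]
    exact ⟨B ω, by simpa [hY] using h1, rfl⟩
  calc _ ≤ μ.real (⋃ y ∈ Y, {ω | B ω = y}) := measureReal_mono hsub (measure_ne_top _ _)
    _ ≤ ∑ y ∈ Y, μ.real {ω | B ω = y} := measureReal_biUnion_finset_le _ _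
    _ ≤ ∑ y ∈ Y, β / α * ∏ i, Q (y i) := by
        refine Finset.sum_le_sum fun y hy => ?_
        simp only [hY, Finset.mem_filter, Finset.mem_univ, true_and] at hy
        refine hy.2.trans ?_
        calc β = β / α * α := by field_simp
          _ ≤ _ := mul_le_mul_of_nonneg_left hy.1 (div_nonneg hβ hα.le)
    _ = β / α * ∑ y ∈ Y, ∏ i, Q (y i) := by rw [Finset.mul_sum]
    _ ≤ β / α * 1 :=
        mul_le_mul_of_nonneg_left (sum_prod_le N hQ0 hQ1 Y) (div_nonneg hβ hα.le)
    _ = β / α := mul_one _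

lemma count_bound {μ : Measure (ℤ → 𝕏)} [IsProbabilityMeasure μ] (k N : ℕ)
    {Q : (Fin k → 𝕏) → ℝ} (hQ0 : ∀ w, 0 ≤ Q w) (hQ1 : ∑ w, Q w ≤ 1) {α β : ℝ} (hα : 0 < α)
    (hβ : 0 ≤ β) :
    μ.real {ω | α ≤ ∏ i ∈ Finset.range N, Q (blk (i * k) k ω) ∧
      pblock μ (N * k) (blk 0 (N * k) ω) ≤ β} ≤ β / α := by
  refine le_trans (measureReal_mono ?_ (measure_ne_top _ _)) (count_abs (μ := μ) N hQ0 hQ1 hα hβ (Bls N k))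
  rintro ω ⟨h1, h2⟩
  refine ⟨?_, ?_⟩
  · rw [← Fin.prod_univ_eq_prod_range (fun i => Q (blk (i * k) k ω))] at h1
    exact h1
  · refine le_of_eq_of_le ?_ h2
    rw [pblock, measureReal_def]
    congr 2
    ext ω'
    exact bls_iff N k ω ω'

lemma rate_nonneg {μ : Measure (ℤ → 𝕏)} [IsProbabilityMeasure μ] {h : ℝ}
    (hrate : Tendsto (fun k => Hblock μ k / k) atTop (nhds h)) : 0 ≤ h := by
  refine ge_of_tendsto' hrate fun k => div_nonneg ?_ (Nat.cast_nonneg _)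
  rw [Hblock, Hent, ← Finset.sum_neg_distrib]
  refine Finset.sum_nonneg fun w _ => ?_
  have h1 := pblock_nonneg μ k w
  have h2 := pblock_le_one (μ := μ) k w
  have := Real.logb_nonpos (b := 2) (by norm_num) h1 h2
  nlinarith

lemma growth {h ε : ℝ} (hh : 0 ≤ h) (hε : 0 < ε) {n : ℕ → ℕ}
    (hn : ∀ k : ℕ, (2 : ℝ) ^ ((k : ℝ) * (h + ε)) ≤ (n k : ℝ)) {C : ℝ} (hC : 0 < C) :
    ∀ᶠ k : ℕ in atTop, C * (2 : ℝ) ^ ((k : ℝ) * (h + ε / 2)) ≤ ((n k / k : ℕ) : ℝ) := by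
  have hr : 1 < (2 : ℝ) ^ (ε / 2) := Real.one_lt_rpow (by norm_num) (by linarith)
  have h1 := tendsto_pow_const_div_const_pow_of_one_lt 1 hr
  have h2 := h1.eventually (gt_mem_nhds (show (0 : ℝ) < 1 / (C + 1) by positivity))
  filter_upwards [h2, eventually_gt_atTop 0] with k hk hk0
  have hk' : (0 : ℝ) < k := by exact_mod_cast hk0
  have e1 : ((2 : ℝ) ^ (ε / 2)) ^ k = 2 ^ ((k : ℝ) * (ε / 2)) := by
    rw [← Real.rpow_natCast, ← Real.rpow_mul (by norm_num), mul_comm]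
  rw [e1, pow_one, div_lt_div_iff₀ (by positivity) (by positivity)] at hk
  have e2 : (2 : ℝ) ^ ((k : ℝ) * (h + ε)) = 2 ^ ((k : ℝ) * (h + ε / 2)) * 2 ^ ((k : ℝ) * (ε / 2)) := by
    rw [← Real.rpow_add (by norm_num)]; congr 1; ring
  have h3 : (1 : ℝ) ≤ 2 ^ ((k : ℝ) * (h + ε / 2)) :=
    Real.one_le_rpow (by norm_num) (by positivity)
  have h4 : (n k : ℝ) < k * ((n k / k : ℕ) + 1) := by
    exact_mod_cast Nat.lt_mul_div_succ (n k) hk0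
  have h5 := hn k
  rw [e2] at h5
  set A : ℝ := 2 ^ ((k : ℝ) * (h + ε / 2))
  have h6 : A * (k * (C + 1)) ≤ k * ((n k / k : ℕ) + 1) := by
    have : A * (k * (C + 1)) ≤ A * 2 ^ ((k : ℝ) * (ε / 2)) :=
      mul_le_mul_of_nonneg_left (by linarith) (by linarith)
    linarith
  have h7 : A * (C + 1) ≤ (n k / k : ℕ) + 1 := by
    refine le_of_mul_le_mul_left ?_ hk'
    linarith
  linarith

lemma bad_bound {μ : Measure (ℤ → 𝕏)} [IsProbabilityMeasure μ] (k N D : ℕ)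
    {R : (Fin k → 𝕏) → ℝ} (hR0 : ∀ w, 0 < R w) (hR1 : ∑ w, R w ≤ 1) {α β : ℝ} (hα : 0 < α)
    (hβ : 0 ≤ β) :
    μ.real {ω | ∃ θ : Fin D → (Fin k → 𝕏), α ≤ ∏ i ∈ Finset.range N, mixQ R θ (blk (i * k) k ω) ∧
      pblock μ (N * k) (blk 0 (N * k) ω) ≤ β} ≤ (Fintype.card 𝕏 : ℝ) ^ (k * D) * (β / α) := by
  classical
  have e : {ω | ∃ θ : Fin D → (Fin k → 𝕏), α ≤ ∏ i ∈ Finset.range N, mixQ R θ (blk (i * k) k ω) ∧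
      pblock μ (N * k) (blk 0 (N * k) ω) ≤ β} = ⋃ θ ∈ (Finset.univ : Finset (Fin D → (Fin k → 𝕏))),
      {ω | α ≤ ∏ i ∈ Finset.range N, mixQ R θ (blk (i * k) k ω) ∧
      pblock μ (N * k) (blk 0 (N * k) ω) ≤ β} := by
    ext ω; simp only [Set.mem_iUnion, Finset.mem_univ, exists_true_left]; rfl
  rw [e]
  refine (measureReal_biUnion_finset_le _ _).trans ?_
  refine (Finset.sum_le_card_nsmul _ _ (β / α) fun θ _ =>
    count_bound k N (fun w => (mixQ_pos hR0 θ w).le) (mixQ_sum hR1 θ) hα hβ).trans ?_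
  simp only [Finset.card_univ, Fintype.card_pi, Finset.prod_const, Fintype.card_fin, nsmul_eq_mul]
  push_cast
  rw [← pow_mul]

lemma lower_bound {μ : Measure (ℤ → 𝕏)} [IsProbabilityMeasure μ]
    (herg : Ergodic shift μ) {h : ℝ}
    (hrate : Tendsto (fun k => Hblock μ k / k) atTop (nhds h))
    {ε : ℝ} (hε : 0 < ε) {n : ℕ → ℕ}
    (hn : ∀ k : ℕ, (2 : ℝ) ^ ((k : ℝ) * (h + ε)) ≤ (n k : ℝ)) {e : ℝ} (he : 0 < e) :
    ∀ᵐ ω ∂μ, ∀ᶠ k : ℕ in atTop, h - 5 * e ≤ plugIn k (n k) ω / k := by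
  have hh := rate_nonneg hrate
  obtain ⟨R, hR0, hR1, hR⟩ := pos_part herg hrate (c' := h + ε / 2) (δ := e) (by linarith) he
  set D : ℕ → ℕ := fun k => ⌈(2 : ℝ) ^ ((k : ℝ) * (h + ε / 2))⌉₊ with hD
  set L : ℝ := Real.logb 2 (Fintype.card 𝕏) with hL
  have hcard : (1 : ℝ) ≤ Fintype.card 𝕏 := by exact_mod_cast Fintype.card_pos (α := 𝕏)
  have hL0 : 0 ≤ L := Real.logb_nonneg (by norm_num) hcard
  set C : ℝ := 2 * L / e + 1 with hC
  have hC0 : 0 < C := by positivity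
  set cond : ℕ → Prop := fun k => C * (2 : ℝ) ^ ((k : ℝ) * (h + ε / 2)) ≤ ((n k / k : ℕ) : ℝ) with hcond
  have hA : ∀ k : ℕ, (1 : ℝ) ≤ 2 ^ ((k : ℝ) * (h + ε / 2)) := fun k =>
    Real.one_le_rpow (by norm_num) (by positivity)
  have hgrow : ∀ᶠ k in atTop, cond k := growth hh hε hn hC0
  have hcN : ∀ k, cond k → 0 < n k / k := by
    intro k hk
    have : (0 : ℝ) < ((n k / k : ℕ) : ℝ) := lt_of_lt_of_le (mul_pos hC0 (by linarith [hA k])) hk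
    exact_mod_cast this
  have hDpos : ∀ k, 0 < D k := fun k => Nat.ceil_pos.2 (by linarith [hA k])
  have hDlog : ∀ k : ℕ, k * (h + ε / 2) ≤ Real.logb 2 (D k) := by
    intro k
    have := Real.logb_le_logb_of_le (b := 2) (by norm_num) (by linarith [hA k])
      (Nat.le_ceil ((2 : ℝ) ^ ((k : ℝ) * (h + ε / 2))))
    rwa [Real.logb_rpow (by norm_num) (by norm_num)] at this
  have hDL : ∀ k, cond k → D k * L ≤ e * ((n k / k : ℕ) : ℝ) := by
    intro k hk
    have h1 : (D k : ℝ) ≤ 2 * 2 ^ ((k : ℝ) * (h + ε / 2)) := by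
      have := Nat.ceil_lt_add_one (a := (2 : ℝ) ^ ((k : ℝ) * (h + ε / 2))) (by linarith [hA k])
      have := hA k
      simp only [hD]
      linarith
    have h2 : e * (C * 2 ^ ((k : ℝ) * (h + ε / 2))) ≤ e * ((n k / k : ℕ) : ℝ) :=
      mul_le_mul_of_nonneg_left hk he.le
    have h3 : e * (C * 2 ^ ((k : ℝ) * (h + ε / 2))) =
        (2 * 2 ^ ((k : ℝ) * (h + ε / 2))) * L + e * 2 ^ ((k : ℝ) * (h + ε / 2)) := by
      rw [hC]; field_simp
    have h4 := mul_le_mul_of_nonneg_right h1 hL0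
    have h5 : 0 ≤ e * (2 : ℝ) ^ ((k : ℝ) * (h + ε / 2)) := by positivity
    linarith
  set al : ℕ → ℝ := fun k => (2 : ℝ) ^ (-(((n k / k * k : ℕ) : ℝ) * (h - 3 * e))) with hal
  set be : ℕ → ℝ := fun k => (2 : ℝ) ^ (-(((n k / k * k : ℕ) : ℝ) * (h - e))) with hbe
  have hal0 : ∀ k, 0 < al k := fun k => Real.rpow_pos_of_pos (by norm_num) _
  have hbe0 : ∀ k, 0 < be k := fun k => Real.rpow_pos_of_pos (by norm_num) _
  set E : ℕ → Set (ℤ → 𝕏) := fun k => {ω | cond k ∧ ∃ θ : Fin (D k) → (Fin k → 𝕏),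
    al k ≤ ∏ i ∈ Finset.range (n k / k), mixQ (R k) θ (blk (i * k) k ω) ∧
      pblock μ (n k / k * k) (blk 0 (n k / k * k) ω) ≤ be k} with hE
  have hEb : ∀ k, μ.real (E k) ≤ ((2 : ℝ) ^ (-e)) ^ k := by
    intro k
    by_cases hk : cond k
    · have h1 : μ.real (E k) ≤ (Fintype.card 𝕏 : ℝ) ^ (k * D k) * (be k / al k) := by
        refine le_trans (measureReal_mono ?_ (measure_ne_top _ _))
          (bad_bound k (n k / k) (D k) (hR0 k) (hR1 k) (hal0 k) (hbe0 k).le)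
        rintro ω ⟨_, h⟩
        exact h
      have h2 : (Fintype.card 𝕏 : ℝ) ^ (k * D k) = 2 ^ (L * (k * D k : ℕ)) := by
        rw [Real.rpow_mul (by norm_num), hL, Real.rpow_logb (by norm_num) (by norm_num) (by linarith),
          Real.rpow_natCast]
      rw [h2, hal, hbe] at h1
      simp only at h1
      rw [← Real.rpow_sub (by norm_num), ← Real.rpow_add (by norm_num)] at h1
      refine h1.trans ?_
      rw [← Real.rpow_natCast, ← Real.rpow_mul (by norm_num)]
      refine Real.rpow_le_rpow_of_exponent_le (by norm_num) ?_
      have h3 := mul_le_mul_of_nonneg_left (hDL k hk) (Nat.cast_nonneg (α := ℝ) k)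
      have h4 : (1 : ℝ) ≤ ((n k / k : ℕ) : ℝ) := by exact_mod_cast hcN k hk
      have h5 : e * k * 1 ≤ e * k * ((n k / k : ℕ) : ℝ) :=
        mul_le_mul_of_nonneg_left h4 (by positivity)
      rw [Nat.cast_mul, Nat.cast_mul]
      nlinarith
    · have : E k = ∅ := by
        ext ω; simp [hE, hk]
      rw [this]; simp; positivity
  have hsum : (∑' k, μ (E k)) ≠ ⊤ := by
    have hs : Summable fun k : ℕ => ((2 : ℝ) ^ (-e)) ^ k :=
      summable_geometric_of_lt_one (by positivity)
        (Real.rpow_lt_one_of_one_lt_of_neg (by norm_num) (by linarith))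
    refine ne_top_of_le_ne_top hs.tsum_ofReal_ne_top (ENNReal.tsum_le_tsum fun k => ?_)
    rw [← ofReal_measureReal]
    exact ENNReal.ofReal_le_ofReal (hEb k)
  have hBC := ae_eventually_notMem hsum
  have hsmb := smb_lower herg hrate (c := h - e) (by linarith)
  have hNk : Tendsto (fun k => n k / k * k) atTop atTop := by
    refine tendsto_atTop_mono' _ ?_ tendsto_id
    filter_upwards [hgrow] with k hk
    exact Nat.le_mul_of_pos_left k (hcN k hk)
  filter_upwards [hBC, hsmb, hR, ae_pos herg.toMeasurePreserving] with ω h1 h2 h3 h0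
  filter_upwards [h1, hNk.eventually h2, h3, hgrow, eventually_ge_atTop (⌈2 / e⌉₊ + 1)]
    with k h1 h2 h3 hk hke
  have hN := hcN k hk
  have hN' : (0 : ℝ) < ((n k / k : ℕ) : ℝ) := by exact_mod_cast hN
  have hk0 : (0 : ℝ) < k := by
    have : 0 < k := by omega
    exact_mod_cast this
  have hp : pblock μ (n k / k * k) (blk 0 (n k / k * k) ω) ≤ be k := by
    have hpos := h0 0 (n k / k * k)
    have : 0 < pblock μ (n k / k * k) (blk 0 (n k / k * k) ω) := hpos
    exact (Real.logb_le_iff_le_rpow (by norm_num) this).1 h2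
  obtain ⟨θ, hθ⟩ := code_bound k (n k) ω hN (hR0 k) (hDpos k)
  have h4 : ∏ i ∈ Finset.range (n k / k), mixQ (R k) θ (blk (i * k) k ω) < al k := by
    by_contra hc
    exact h1 ⟨hk, θ, not_lt.1 hc, hp⟩
  have hP : 0 < ∏ i ∈ Finset.range (n k / k), mixQ (R k) θ (blk (i * k) k ω) :=
    Finset.prod_pos fun i _ => mixQ_pos (hR0 k) θ _
  have h5 := Real.logb_lt_logb (b := 2) (by norm_num) hP h4
  rw [hal, Real.logb_rpow (by norm_num) (by norm_num)] at h5
  have h6 : ∑ i ∈ Finset.range (n k / k),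
      max 0 (-Real.logb 2 (R k (blk (i * k) k ω)) - Real.logb 2 (D k)) ≤
      ((n k / k * k : ℕ) : ℝ) * e := by
    refine le_trans (Finset.sum_le_sum fun i _ => ?_) (h3 (n k / k) hN)
    exact max_le_max le_rfl (by linarith [hDlog k])
  have h7 : ((n k / k : ℕ) : ℝ) * (k * (h - 3 * e)) ≤
      ((n k / k : ℕ) : ℝ) * (plugIn k (n k) ω + 2 + k * e) := by
    rw [Nat.cast_mul] at h5 h6
    nlinarith
  have h8 := le_of_mul_le_mul_left h7 hN'
  have h9 : 2 ≤ k * e := by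
    have : 2 / e ≤ k := (Nat.le_ceil _).trans (by exact_mod_cast (by omega : ⌈2 / e⌉₊ ≤ k))
    rwa [div_le_iff₀ he] at this
  rw [le_div_iff₀ hk0]
  nlinarith

lemma emp_le_one (k n : ℕ) (ω : ℤ → 𝕏) (w : Fin k → 𝕏) : empDist k n ω w ≤ 1 := by
  rw [empDist]
  refine div_le_one_of_le₀ ?_ (Nat.cast_nonneg _)
  refine (Finset.sum_le_card_nsmul _ _ 1 fun i _ => ?_).trans (by simp)
  split_ifs <;> norm_num

lemma measurable_emp (k n : ℕ) (w : Fin k → 𝕏) :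
    Measurable fun ω : ℤ → 𝕏 => empDist k n ω w := by
  simp only [empDist]
  refine Measurable.div_const (Finset.measurable_sum _ fun i _ => ?_) _
  exact Measurable.ite (msInter _ k w) measurable_const measurable_const

lemma integral_emp {μ : Measure (ℤ → 𝕏)} [IsProbabilityMeasure μ]
    (hT : MeasurePreserving shift μ μ) (k n : ℕ) (hN : 0 < n / k) (w : Fin k → 𝕏) :
    ∫ ω, empDist k n ω w ∂μ = pblock μ k w := by
  have hN' : ((n / k : ℕ) : ℝ) ≠ 0 := by exact_mod_cast hN.ne'
  simp only [empDist]
  rw [integral_div, integral_finsetSum]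
  · have : ∀ i ∈ Finset.range (n / k),
        ∫ ω, (if blk (i * k) k ω = w then (1 : ℝ) else 0) ∂μ = pblock μ k w := by
      intro i _
      have := integral_bz hT ((i * k : ℕ) : ℤ) k (fun v => if v = w then (1 : ℝ) else 0)
      simp only [mul_ite, mul_one, mul_zero, Finset.sum_ite_eq', Finset.mem_univ, if_true] at this
      exact this
    rw [Finset.sum_congr rfl this]
    simp only [Finset.sum_const, Finset.card_range, nsmul_eq_mul]
    field_simp
  · intro i _
    exact integrable_bz ((i * k : ℕ) : ℤ) k (fun v => if v = w then (1 : ℝ) else 0)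

lemma Hent_eq {A : Type*} [Fintype A] (p : A → ℝ) :
    Hent p = ∑ w, Real.negMulLog (p w) / Real.log 2 := by
  rw [Hent, ← Finset.sum_neg_distrib]
  refine Finset.sum_congr rfl fun w _ => ?_
  rw [Real.negMulLog, Real.logb]; ring

lemma integrable_nml {μ : Measure (ℤ → 𝕏)} [IsProbabilityMeasure μ] (k n : ℕ) (w : Fin k → 𝕏) :
    Integrable (fun ω => Real.negMulLog (empDist k n ω w)) μ := by
  refine Integrable.of_bound (C := 1)
    (Real.continuous_negMulLog.measurable.comp (measurable_emp k n w)).aestronglyMeasurable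
    (ae_of_all _ fun ω => ?_)
  have h0 := emp_nonneg k n ω w
  have h1 := emp_le_one k n ω w
  rw [Real.norm_of_nonneg (Real.negMulLog_nonneg h0 h1)]
  by_cases h : empDist k n ω w = 1
  · rw [h]; simp
  · linarith [Real.negMulLog_lt_one_sub_self h0 h]

lemma integrable_plugIn {μ : Measure (ℤ → 𝕏)} [IsProbabilityMeasure μ] (k n : ℕ) :
    Integrable (fun ω => plugIn k n ω) μ := by
  simp only [plugIn, Hent_eq]
  exact integrable_finsetSum _ fun w _ => (integrable_nml k n w).div_const _

lemma plugIn_nonneg (k n : ℕ) (ω : ℤ → 𝕏) : 0 ≤ plugIn k n ω := by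
  rw [plugIn, Hent_eq]
  exact Finset.sum_nonneg fun w _ => div_nonneg
    (Real.negMulLog_nonneg (emp_nonneg k n ω w) (emp_le_one k n ω w)) (Real.log_nonneg (by norm_num))

lemma integral_plugIn_le {μ : Measure (ℤ → 𝕏)} [IsProbabilityMeasure μ]
    (hT : MeasurePreserving shift μ μ) (k n : ℕ) (hN : 0 < n / k) :
    ∫ ω, plugIn k n ω ∂μ ≤ Hblock μ k := by
  simp only [plugIn, Hent_eq, Hblock]
  rw [integral_finsetSum _ fun w _ => (integrable_nml k n w).div_const _]
  refine Finset.sum_le_sum fun w _ => ?_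
  rw [integral_div]
  refine div_le_div_of_nonneg_right ?_ (Real.log_nonneg (by norm_num))
  rw [← integral_emp hT k n hN w]
  refine ConcaveOn.le_map_integral Real.concaveOn_negMulLog
    Real.continuous_negMulLog.continuousOn isClosed_Ici
    (ae_of_all _ fun ω => emp_nonneg k n ω w) ?_ (integrable_nml k n w)
  refine Integrable.of_bound (C := 1) (measurable_emp k n w).aestronglyMeasurable
    (ae_of_all _ fun ω => ?_)
  rw [Real.norm_of_nonneg (emp_nonneg k n ω w)]
  exact emp_le_one k n ω w

lemma exists_subseq {μ : Measure (ℤ → 𝕏)} [IsProbabilityMeasure μ] {h : ℝ} (hh : 0 ≤ h)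
    {u : ℕ → (ℤ → 𝕏) → ℝ} (hu : ∀ k, Integrable (u k) μ) (hu0 : ∀ k ω, 0 ≤ u k ω)
    {b : ℕ → ℝ} (hb : Tendsto b atTop (nhds h)) (hub : ∀ᶠ k in atTop, ∫ ω, u k ω ∂μ ≤ b k)
    (hlow : ∀ᵐ ω ∂μ, ∀ e > 0, ∀ᶠ k in atTop, h - e ≤ u k ω) :
    ∃ ns : ℕ → ℕ, StrictMono ns ∧ ∀ᵐ ω ∂μ, Tendsto (fun i => u (ns i) ω) atTop (nhds h) := by
  have hIntg : ∀ k, Integrable (fun ω => max 0 (h - u k ω)) μ := fun k =>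
    (integrable_const (0 : ℝ)).sup ((integrable_const h).sub (hu k))
  have hsub : ∀ k, Integrable (fun ω => u k ω - h) μ := fun k => (hu k).sub (integrable_const h)
  have h1 : Tendsto (fun k => ∫ ω, max 0 (h - u k ω) ∂μ) atTop (nhds (∫ ω, (0 : ℝ) ∂μ)) := by
    refine tendsto_integral_of_dominated_convergence (fun _ => h)
      (fun k => (hIntg k).aestronglyMeasurable) (integrable_const h) (fun k => ae_of_all _ fun ω => ?_) ?_
    · rw [Real.norm_of_nonneg (le_max_left _ _)]
      exact max_le hh (by linarith [hu0 k ω])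
    · filter_upwards [hlow] with ω hω
      rw [Metric.tendsto_atTop']
      intro e he
      obtain ⟨N, hN⟩ := eventually_atTop.1 (hω (e / 2) (by linarith))
      refine ⟨N, fun k hk => ?_⟩
      have := hN k hk.le
      rw [Real.dist_eq, sub_zero, abs_of_nonneg (le_max_left _ _)]
      exact max_lt he (by linarith)
  rw [integral_zero] at h1
  have h2 : ∀ k, ∫ ω, ‖u k ω - h‖ ∂μ = (∫ ω, u k ω ∂μ) - h + 2 * ∫ ω, max 0 (h - u k ω) ∂μ := by
    intro k
    have : ∀ ω, ‖u k ω - h‖ = (u k ω - h) + 2 * max 0 (h - u k ω) := by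
      intro ω
      rw [Real.norm_eq_abs]
      rcases le_total h (u k ω) with hc | hc
      · rw [abs_of_nonneg (by linarith), max_eq_left (by linarith)]; ring
      · rw [abs_of_nonpos (by linarith), max_eq_right (by linarith)]; ring
    simp only [this]
    rw [integral_add (hsub k) ((hIntg k).const_mul 2),
      integral_sub (hu k) (integrable_const h), integral_const_mul]
    simp
  have h3 : Tendsto (fun k => ∫ ω, ‖u k ω - h‖ ∂μ) atTop (nhds 0) := by
    have h4 : Tendsto (fun k => b k - h + 2 * ∫ ω, max 0 (h - u k ω) ∂μ) atTop (nhds 0) := by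
      have := (hb.sub_const h).add (h1.const_mul 2)
      simpa using this
    refine tendsto_of_tendsto_of_tendsto_of_le_of_le' tendsto_const_nhds h4
      (Eventually.of_forall fun k => integral_nonneg fun ω => norm_nonneg _) ?_
    filter_upwards [hub] with k hk
    rw [h2]; linarith
  have h5 : TendstoInMeasure μ u atTop (fun _ => h) := by
    refine tendstoInMeasure_of_tendsto_eLpNorm (p := 1) one_ne_zero
      (fun k => (hu k).aestronglyMeasurable) aestronglyMeasurable_const ?_
    have h6 := ENNReal.tendsto_ofReal h3
    rw [ENNReal.ofReal_zero] at h6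
    refine h6.congr fun k => ?_
    rw [eLpNorm_one_eq_lintegral_enorm,
      ofReal_integral_norm_eq_lintegral_enorm (hsub k)]
    rfl
  exact h5.exists_seq_tendsto_ae

/-- Theorem 1, almost-sure liminf form: for a stationary ergodic process with
entropy rate `h`, any `ε > 0` and sample sizes `n(k) ≥ 2^{k(h+ε)}`, almost
surely `liminf_{k→∞} H(k, X_1^{n(k)})/k = h`. -/
theorem plugIn_rate_liminf_eq_ae
    {μ : Measure (ℤ → 𝕏)} [IsProbabilityMeasure μ]
    (herg : Ergodic shift μ) (h : ℝ)
    (hrate : Tendsto (fun k => Hblock μ k / k) atTop (nhds h))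
    (ε : ℝ) (hε : 0 < ε) (n : ℕ → ℕ)
    (hn : ∀ k : ℕ, (2 : ℝ) ^ ((k : ℝ) * (h + ε)) ≤ (n k : ℝ)) :
    ∀ᵐ ω ∂μ, Filter.liminf (fun k => plugIn k (n k) ω / k) atTop = h := by
  have hh := rate_nonneg hrate
  have hlow : ∀ᵐ ω ∂μ, ∀ e > 0, ∀ᶠ k : ℕ in atTop, h - e ≤ plugIn k (n k) ω / k := by
    have h1 : ∀ᵐ ω ∂μ, ∀ m : ℕ, ∀ᶠ k : ℕ in atTop,
        h - 5 * (1 / ((m : ℝ) + 1)) ≤ plugIn k (n k) ω / k :=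
      ae_all_iff.2 fun m => lower_bound herg hrate hε hn (by positivity)
    filter_upwards [h1] with ω hω e he
    obtain ⟨m, hm⟩ := exists_nat_one_div_lt (show (0 : ℝ) < e / 5 by linarith)
    filter_upwards [hω m] with k hk
    linarith
  have hN : ∀ᶠ k : ℕ in atTop, 0 < n k / k := by
    filter_upwards [growth hh hε hn one_pos] with k hk
    have : (0 : ℝ) < ((n k / k : ℕ) : ℝ) := lt_of_lt_of_le (by positivity) hk
    exact_mod_cast this
  obtain ⟨ns, hns, hlim⟩ := exists_subseq (μ := μ) hh
    (u := fun k ω => plugIn k (n k) ω / k) (b := fun k => Hblock μ k / k)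
    (fun k => (integrable_plugIn k (n k)).div_const _)
    (fun k ω => div_nonneg (plugIn_nonneg k (n k) ω) (Nat.cast_nonneg _)) hrate
    (by
      filter_upwards [hN] with k hk
      rw [integral_div]
      exact div_le_div_of_nonneg_right (integral_plugIn_le herg.toMeasurePreserving k (n k) hk)
        (Nat.cast_nonneg _)) hlow
  filter_upwards [hlow, hlim] with ω h1 h2
  have hfreq : ∀ y > h, ∃ᶠ k : ℕ in atTop, plugIn k (n k) ω / k ≤ y := by
    intro y hy
    have h3 : ∃ᶠ i : ℕ in atTop, plugIn (ns i) (n (ns i)) ω / (ns i : ℕ) ≤ y :=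
      (h2.eventually (Iic_mem_nhds hy)).frequently
    exact hns.tendsto_atTop.frequently h3
  have hbdd : IsBoundedUnder (· ≥ ·) atTop (fun k : ℕ => plugIn k (n k) ω / k) :=
    isBoundedUnder_of ⟨0, fun k => div_nonneg (plugIn_nonneg k (n k) ω) (Nat.cast_nonneg _)⟩
  have hcob : IsCoboundedUnder (· ≥ ·) atTop (fun k : ℕ => plugIn k (n k) ω / k) :=
    IsCoboundedUnder.of_frequently_le (hfreq (h + 1) (by linarith))
  apply le_antisymm
  · exact le_of_forall_gt_imp_ge_of_dense fun y hy => liminf_le_of_frequently_le (hfreq y hy) hbdd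
  · refine le_of_forall_lt_imp_le_of_dense fun y hy => le_liminf_of_le hcob ?_
    filter_upwards [h1 (h - y) (by linarith)] with k hk
    linarith
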